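/- Under the hypotheses of the scaling-function theorem (C repelling; r and #r⁻¹ continuous at the points of C; m_0 β-Lipschitz at the points of C satisfying the quadrature and low-pass conditions), set V_0 = closure in L²(X_∞, λ_C) of {π(f)φ̂ : f ∈ L^∞(X, ρ)} and V_n = U^{-n} V_0 for n ∈ ℤ. Then V_n ⊂ V_{n+1} for all n ∈ ℤ, and the closure of ⋃_{n∈ℤ} V_n equals L²(X_∞, λ_C). -/

import Mathlib

open MeasureTheory Filter Topology ENNReal

noncomputable section

abbrev Solenoid {X : Type*} (r : X → X) : Type _ :=
  {z : ℤ → X // ∀ n : ℤ, r (z (n + 1)) = z n}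

/-- The shift automorphism `r̂` on the solenoid, `(r̂ z) n = z (n-1)`. -/
def shiftHat {X : Type*} (r : X → X) (z : Solenoid r) : Solenoid r :=
  ⟨fun n => z.1 (n - 1), fun n => by
    have h := z.2 (n - 1)
    have h1 : n - 1 + 1 = n := by ring
    rw [h1] at h
    show r (z.1 (n + 1 - 1)) = z.1 (n - 1)
    have h2 : n + 1 - 1 = n := by ring
    rw [h2]
    exact h⟩

/-- The inverse of the shift automorphism `r̂`. -/
def shiftHatInv {X : Type*} (r : X → X) (z : Solenoid r) : Solenoid r :=
  ⟨fun n => z.1 (n + 1), fun n => z.2 (n + 1)⟩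

/-- Integer powers `r̂^n` of the shift automorphism. -/
def shiftHatZ {X : Type*} (r : X → X) : ℤ → Solenoid r → Solenoid r
  | Int.ofNat n => (shiftHat r)^[n]
  | Int.negSucc n => (shiftHatInv r)^[n + 1]

/-- The function `𝔠(z) = #r⁻¹(r(z₀))` on the solenoid. -/
def cFun {X : Type*} (r : X → X) (z : Solenoid r) : ℝ :=
  Nat.card (r ⁻¹' {r (z.1 0)})

/-- The cocycle `𝔠⁽ⁿ⁾`: `𝔠⁽⁰⁾ = 1`, `𝔠⁽ⁿ⁾ = 𝔠 ⋯ (𝔠∘r̂^{n-1})` for `n ≥ 1`, and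
`𝔠⁽⁻ⁿ⁾ = 1/((𝔠∘r̂⁻¹) ⋯ (𝔠∘r̂⁻ⁿ))` for `n ≥ 1`. -/
def cPow {X : Type*} (r : X → X) : ℤ → Solenoid r → ℝ
  | Int.ofNat n => fun z => ∏ k ∈ Finset.range n, cFun r (shiftHatZ r (k : ℤ) z)
  | Int.negSucc n => fun z =>
      (∏ k ∈ Finset.range (n + 1), cFun r (shiftHatZ r (-(k + 1) : ℤ) z))⁻¹

/-- The set `N_C(x)` of paths starting at `x` converging to the cycle `C = {xc i}`. -/
def NC {X : Type*} [TopologicalSpace X] (r : X → X) {p : ℕ} (xc : ZMod p → X) (x : X) :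
    Set (Solenoid r) :=
  {z | z.1 0 = x ∧ ∃ i : ZMod p, Tendsto (fun n : ℕ => z.1 ((p : ℤ) * (n : ℤ))) atTop (𝓝 (xc i))}

/-- The scaling function `φ̂(x, (z_k)) = ∏_{k=1}^∞ α_{i(ω)+k}⁻¹ m₀(z_k) / √(#r⁻¹(r z_k))`. -/
def scalingFn {X : Type*} (r : X → X) {p : ℕ} (α : ZMod p → ℂ) (ι : Solenoid r → ZMod p)
    (m0 : X → ℂ) (z : Solenoid r) : ℂ :=
  ∏' k : ℕ, (α (ι z + ((k + 1 : ℕ) : ZMod p)))⁻¹ * m0 (z.1 ((k : ℤ) + 1)) /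
    (Real.sqrt (Nat.card (r ⁻¹' {r (z.1 ((k : ℤ) + 1))})) : ℂ)

/-!
Following a path of `N_C(x)` far enough backwards, i.e. applying `r̂⁻¹` often enough, brings it so
close to the cycle that it shadows it from time `0` on. Since `r` is injective near each point of
the cycle, a shadowing path is determined by its zeroth coordinate, and the tail of the product
defining `φ̂` is close to `1`. So, up to a small error, `Uⁿ ξ` lives for large `n` on shadowing
paths with `φ̂ ≈ 1`, where it has the form `g (z 0) ≈ g (z 0) φ̂ z`. The approximation by `π g φ̂`
costs nothing off this set because the quadrature condition gives `∑ |φ̂|² ≤ 1` along `N_C(x)`,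
hence `‖π g φ̂‖ ≤ ‖g‖`. Nesting is the refinement equation `U φ̂ = π m₀ φ̂`.
-/

namespace Solenoid

variable {X : Type*} {r : X → X}

theorem iterate_apply (z : Solenoid r) (n : ℕ) (k : ℤ) : r^[n] (z.1 (k + n)) = z.1 k := by
  induction n with
  | zero => simp only [Function.iterate_zero, id_eq, Nat.cast_zero, add_zero]
  | succ n ih =>
    rw [Function.iterate_succ_apply, Nat.cast_succ, ← add_assoc, z.2, ih]

theorem ext_of_nat {z w : Solenoid r} (h : ∀ n : ℕ, z.1 n = w.1 n) : z = w := by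
  refine Subtype.ext (funext fun k => ?_)
  obtain ⟨m, hm⟩ := Int.eq_ofNat_of_zero_le (show 0 ≤ k + k.natAbs by omega)
  rw [← iterate_apply z k.natAbs k, ← iterate_apply w k.natAbs k, hm, h]

theorem apply_eq_of_le {z w : Solenoid r} {m n : ℕ} (hmn : m ≤ n) (h : z.1 n = w.1 n) :
    z.1 m = w.1 m := by
  have hn : (m : ℤ) + (n - m : ℕ) = n := by omega
  rw [← iterate_apply z (n - m) m, ← iterate_apply w (n - m) m, hn, h]

theorem shiftHat_apply_zero (z : Solenoid r) : (shiftHat r z).1 0 = r (z.1 0) :=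
  (z.2 (0 - 1)).symm

theorem shiftHatInv_iterate_apply (z : Solenoid r) (n : ℕ) (k : ℤ) :
    ((shiftHatInv r)^[n] z).1 k = z.1 (k + n) := by
  induction n generalizing k with
  | zero => simp only [Function.iterate_zero, id_eq, Nat.cast_zero, add_zero]
  | succ n ih =>
    rw [Function.iterate_succ_apply', shiftHatInv, ih, Nat.cast_succ, add_right_comm, add_assoc]

theorem leftInverse_shiftHat : Function.LeftInverse (shiftHat r) (shiftHatInv r) := fun z =>
  Subtype.ext (funext fun k => congrArg z.1 (sub_add_cancel k 1))

theorem leftInverse_shiftHatInv : Function.LeftInverse (shiftHatInv r) (shiftHat r) := fun z =>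
  Subtype.ext (funext fun k => congrArg z.1 (add_sub_cancel_right k 1))

theorem shiftHatInv_iterate_apply_zero (z : Solenoid r) (n : ℕ) :
    r^[n] (((shiftHatInv r)^[n] z).1 0) = z.1 0 := by
  rw [shiftHatInv_iterate_apply, iterate_apply]

end Solenoid

open Solenoid

section Cycles

variable {X : Type*} [MetricSpace X] {r : X → X} {p : ℕ} {xc : ZMod p → X}

/-- A repelling cycle of length `p`, indexed so that `r` lowers the index, at whose points `r` and
the fibre cardinality `#r⁻¹` are continuous. -/
structure IsRepellingCycle (r : X → X) (xc : ZMod p → X) : Prop where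
  injective : Function.Injective xc
  map_add_one : ∀ i, r (xc (i + 1)) = xc i
  expanding : ∀ i, ∃ c δ : ℝ, 0 < c ∧ c < 1 ∧ 0 < δ ∧ ∀ x : X,
    0 < dist x (xc i) → dist x (xc i) < δ → c⁻¹ * dist x (xc i) < dist (r^[p] x) (xc i)
  continuousAt : ∀ i, ContinuousAt r (xc i)
  eventually_card_eq :
    ∀ i, ∀ᶠ y in 𝓝 (xc i), Nat.card (r ⁻¹' {y}) = Nat.card (r ⁻¹' {xc i})

/-- The path `z` is asymptotic to the cycle `xc` with phase `i`: its coordinate `z n` approaches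
the moving target `xc (i + n)`. -/
def FollowsCycle (xc : ZMod p → X) (z : Solenoid r) (i : ZMod p) : Prop :=
  Tendsto (fun n : ℕ => dist (z.1 n) (xc (i + n))) atTop (𝓝 0)

theorem IsRepellingCycle.map_apply (hC : IsRepellingCycle r xc) (i : ZMod p) :
    r (xc i) = xc (i - 1) := by
  rw [← hC.map_add_one (i - 1), sub_add_cancel]

theorem IsRepellingCycle.tendsto_sub (hC : IsRepellingCycle r xc) {z : Solenoid r} {i : ZMod p}
    (h : Tendsto (fun n : ℕ => z.1 ((p : ℤ) * n)) atTop (𝓝 (xc i))) (j : ℕ) :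
    Tendsto (fun n : ℕ => z.1 ((p : ℤ) * n - j)) atTop (𝓝 (xc (i - j))) := by
  induction j with
  | zero => simpa only [Nat.cast_zero, sub_zero] using h
  | succ j ih =>
    have hr := (hC.continuousAt _).tendsto.comp ih
    rw [hC.map_apply, sub_sub, ← Nat.cast_succ] at hr
    refine hr.congr fun n => ?_
    rw [Function.comp_apply, Nat.cast_succ, ← sub_sub, ← z.2 ((p : ℤ) * n - j - 1),
      sub_add_cancel]

theorem IsRepellingCycle.followsCycle_iff [NeZero p] (hC : IsRepellingCycle r xc)
    {z : Solenoid r} {i : ZMod p} :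
    FollowsCycle xc z i ↔ Tendsto (fun n : ℕ => z.1 ((p : ℤ) * n)) atTop (𝓝 (xc i)) := by
  have hp : 0 < p := NeZero.pos p
  constructor <;> intro h
  · rw [tendsto_iff_dist_tendsto_zero]
    refine (h.comp (tendsto_id.const_mul_atTop' hp)).congr fun n => ?_
    simp only [Function.comp_apply, id_eq, Nat.cast_mul, CharP.cast_eq_zero, zero_mul, add_zero]
  · let D : ℕ → ℝ := fun n =>
      ∑ j ∈ Finset.range (p + 1), dist (z.1 ((p : ℤ) * n - j)) (xc (i - j))
    have hD : Tendsto D atTop (𝓝 0) := by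
      simpa only [Finset.sum_const_zero] using tendsto_finsetSum (Finset.range (p + 1))
        fun j _ => tendsto_iff_dist_tendsto_zero.1 (hC.tendsto_sub h j)
    have hdiv : Tendsto (fun k : ℕ => k / p + 1) atTop atTop :=
      (tendsto_add_atTop_nat 1).comp (Nat.tendsto_div_const_atTop hp.ne')
    refine squeeze_zero (fun _ => dist_nonneg) (fun k => ?_) (hD.comp hdiv)
    have hmod := Nat.mod_lt k hp
    have hk : (p : ℤ) * (k / p + 1 : ℕ) - (p - k % p : ℕ) = k := by
      have := congrArg (Nat.cast : ℕ → ℤ) (Nat.div_add_mod k p)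
      push_cast [Nat.cast_sub hmod.le] at this ⊢
      linarith
    have hi : i - (p - k % p : ℕ) = i + (k : ZMod p) := by
      rw [Nat.cast_sub hmod.le, CharP.cast_eq_zero, ZMod.natCast_mod, zero_sub, sub_neg_eq_add]
    calc dist (z.1 k) (xc (i + k))
        = dist (z.1 (p * (k / p + 1 : ℕ) - (p - k % p : ℕ))) (xc (i - (p - k % p : ℕ))) := by
          rw [hk, hi]
      _ ≤ D (k / p + 1) :=
          Finset.single_le_sum (f := fun j : ℕ => dist (z.1 (p * (k / p + 1 : ℕ) - j)) (xc (i - j)))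
            (fun _ _ => dist_nonneg) (Finset.mem_range.2 (by omega))

theorem IsRepellingCycle.mem_NC_iff [NeZero p] (hC : IsRepellingCycle r xc) {z : Solenoid r}
    {x : X} : z ∈ NC r xc x ↔ z.1 0 = x ∧ ∃ i, FollowsCycle xc z i := by
  simp only [hC.followsCycle_iff]
  rfl

namespace FollowsCycle

variable {z : Solenoid r} {i : ZMod p}

theorem shiftHat (h : FollowsCycle xc z i) : FollowsCycle xc (shiftHat r z) (i - 1) := by
  rw [FollowsCycle, ← tendsto_add_atTop_iff_nat 1]
  refine h.congr fun n => ?_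
  simp only [_root_.shiftHat, Nat.cast_succ, add_sub_cancel_right, sub_add_add_cancel]

theorem shiftHatInv_iterate (h : FollowsCycle xc z i) (n : ℕ) :
    FollowsCycle xc ((shiftHatInv r)^[n] z) (i + n) := by
  refine ((tendsto_add_atTop_iff_nat n).2 h).congr fun k => ?_
  rw [shiftHatInv_iterate_apply, Nat.cast_add, Nat.cast_add, add_right_comm, add_assoc]

end FollowsCycle

theorem IsRepellingCycle.shiftHat_mem_NC [NeZero p] (hC : IsRepellingCycle r xc)
    {z : Solenoid r} {x : X} (hz : z ∈ NC r xc x) : shiftHat r z ∈ NC r xc (r x) := by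
  obtain ⟨rfl, i, hi⟩ := hC.mem_NC_iff.1 hz
  exact hC.mem_NC_iff.2 ⟨shiftHat_apply_zero z, i - 1, hi.shiftHat⟩

theorem IsRepellingCycle.shiftHatInv_mem_NC [NeZero p] (hC : IsRepellingCycle r xc)
    {z : Solenoid r} {x : X} (hz : z ∈ NC r xc x) : shiftHatInv r z ∈ NC r xc (z.1 1) := by
  obtain ⟨-, i, hi⟩ := hC.mem_NC_iff.1 hz
  exact hC.mem_NC_iff.2 ⟨rfl, i + (1 : ℕ), hi.shiftHatInv_iterate 1⟩

/-- `ι` assigns to every path in some `N_C(x)` the index `i(ω)` of the cycle point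
`lim_k z_{kp}`. -/
def IsLimitIndex (r : X → X) (xc : ZMod p → X) (ι : Solenoid r → ZMod p) : Prop :=
  ∀ x : X, ∀ ω ∈ NC r xc x,
    Tendsto (fun n : ℕ => ω.1 ((p : ℤ) * (n : ℤ))) atTop (𝓝 (xc (ι ω)))

theorem IsLimitIndex.eq_of_followsCycle [NeZero p] {ι : Solenoid r → ZMod p}
    (hι : IsLimitIndex r xc ι) (hC : IsRepellingCycle r xc) {z : Solenoid r} {i : ZMod p}
    (h : FollowsCycle xc z i) : ι z = i :=
  hC.injective <| tendsto_nhds_unique (hι (z.1 0) z (hC.mem_NC_iff.2 ⟨rfl, i, h⟩))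
    (hC.followsCycle_iff.1 h)

theorem IsRepellingCycle.exists_uniform_contraction [NeZero p] (hC : IsRepellingCycle r xc) :
    ∃ c δ : ℝ, 0 < c ∧ c < 1 ∧ 0 < δ ∧
      ∀ i x, dist x (xc i) < δ → dist x (xc i) ≤ c * dist (r^[p] x) (xc i) := by
  choose c δ hc0 hc1 hδ hexp using hC.expanding
  obtain ⟨imax, hmax⟩ := Finite.exists_max c
  obtain ⟨imin, hmin⟩ := Finite.exists_min δ
  refine ⟨c imax, δ imin, hc0 _, hc1 _, hδ _, fun i x hx => ?_⟩
  rcases (dist_nonneg (x := x) (y := xc i)).eq_or_lt with h0 | hpos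
  · rw [← h0]
    exact mul_nonneg (hc0 _).le dist_nonneg
  · have hlt := (inv_mul_lt_iff₀ (hc0 i)).1 (hexp i x hpos (hx.trans_le (hmin i)))
    exact hlt.le.trans (mul_le_mul_of_nonneg_right (hmax i) dist_nonneg)

theorem eventually_le_geometric_of_contraction {d : ℕ → ℝ} {q : ℕ} (hq : q ≠ 0) {c : ℝ}
    (hc0 : 0 < c) (hc1 : c < 1) (hd : Tendsto d atTop (𝓝 0))
    (hstep : ∀ᶠ k in atTop, d (k + q) ≤ c * d k) :
    ∃ A b : ℝ, 0 < A ∧ 0 < b ∧ b < 1 ∧ ∀ᶠ k in atTop, d k ≤ A * b ^ (k + 1) := by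
  obtain ⟨K, hK⟩ := eventually_atTop.1 (hstep.and (hd.eventually_le_const one_pos))
  obtain ⟨b, hb0, hb1, hbq⟩ : ∃ b : ℝ, 0 < b ∧ b < 1 ∧ b ^ q = c :=
    ⟨c ^ (q : ℝ)⁻¹, Real.rpow_pos_of_pos hc0 _, Real.rpow_lt_one hc0.le hc1 (by positivity),
      Real.rpow_inv_natCast_pow hc0.le hq⟩
  refine ⟨(b ^ (K + q))⁻¹, b, by positivity, hb0, hb1, eventually_atTop.2 ⟨K, fun k hk => ?_⟩⟩
  induction k using Nat.strong_induction_on with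
  | _ k ih =>
    rcases lt_or_ge k (K + q) with hlt | hge
    · refine (hK k hk).2.trans ?_
      rw [inv_mul_eq_div, one_le_div (by positivity)]
      exact pow_le_pow_of_le_one hb0.le hb1.le hlt
    · obtain ⟨m, rfl⟩ : ∃ m, k = m + q := ⟨k - q, by omega⟩
      calc d (m + q) ≤ c * d m := (hK m (by omega)).1
        _ ≤ c * ((b ^ (K + q))⁻¹ * b ^ (m + 1)) := by gcongr; exact ih m (by omega) (by omega)
        _ = (b ^ (K + q))⁻¹ * b ^ (m + q + 1) := by rw [← hbq]; ring

theorem FollowsCycle.eventually_dist_le_geometric [NeZero p] (hC : IsRepellingCycle r xc)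
    {z : Solenoid r} {i : ZMod p} (h : FollowsCycle xc z i) :
    ∃ A b : ℝ, 0 < A ∧ 0 < b ∧ b < 1 ∧
      ∀ᶠ k : ℕ in atTop, dist (z.1 k) (xc (i + k)) ≤ A * b ^ (k + 1) := by
  obtain ⟨c, δ, hc0, hc1, hδ, hcontr⟩ := hC.exists_uniform_contraction
  refine eventually_le_geometric_of_contraction (NeZero.ne p) hc0 hc1 h ?_
  filter_upwards [((tendsto_add_atTop_iff_nat p).2 h).eventually_lt_const hδ] with k hk
  have hle := hcontr _ _ hk
  have hphase : ((k + p : ℕ) : ZMod p) = k := by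
    rw [Nat.cast_add, CharP.cast_eq_zero (ZMod p) p, add_zero]
  rw [hphase] at hle ⊢
  rwa [Nat.cast_add, iterate_apply, ← Nat.cast_add] at hle

theorem IsRepellingCycle.eventually_card_fiber_eq (hC : IsRepellingCycle r xc) (i : ZMod p) :
    ∀ᶠ y in 𝓝 (xc i), Nat.card (r ⁻¹' {r y}) = Nat.card (r ⁻¹' {r (xc i)}) := by
  have hr := (hC.continuousAt i).tendsto
  rw [hC.map_apply] at hr ⊢
  exact hr.eventually (hC.eventually_card_eq (i - 1))

theorem FollowsCycle.eventually_forall_nhds [NeZero p] {z : Solenoid r} {i : ZMod p}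
    (h : FollowsCycle xc z i) {P : ZMod p → X → Prop} (hP : ∀ j, ∀ᶠ y in 𝓝 (xc j), P j y) :
    ∀ᶠ k : ℕ in atTop, P (i + k) (z.1 k) := by
  choose δ hδ hball using fun j => Metric.eventually_nhds_iff.1 (hP j)
  obtain ⟨imin, hmin⟩ := Finite.exists_min δ
  filter_upwards [h.eventually_lt_const (hδ imin)] with k hk
  exact hball _ (hk.trans_le (hmin _))

theorem exists_radius_injOn_disjoint {Y ι : Type*} [Finite ι] {f : X → Y} {x : ι → X}
    (hx : Function.Injective x) (hf : ∀ i, ∃ η > 0, Set.InjOn f (Metric.ball (x i) η)) :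
    ∃ η > 0, (∀ i, Set.InjOn f (Metric.ball (x i) η)) ∧
      Pairwise (Function.onFun Disjoint fun i => Metric.ball (x i) η) := by
  have hinj : ∀ᶠ η in 𝓝[>] (0 : ℝ), ∀ i, Set.InjOn f (Metric.ball (x i) η) := by
    refine eventually_all.2 fun i => ?_
    obtain ⟨η, hη, hfη⟩ := hf i
    filter_upwards [Ioo_mem_nhdsGT hη] with ε hε
    exact hfη.mono (Metric.ball_subset_ball hε.2.le)
  have hdisj : ∀ᶠ η in 𝓝[>] (0 : ℝ), ∀ i j, i ≠ j →
      Disjoint (Metric.ball (x i) η) (Metric.ball (x j) η) := by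
    refine eventually_all.2 fun i => eventually_all.2 fun j => eventually_imp_distrib_left.2 ?_
    intro hij
    filter_upwards [Ioo_mem_nhdsGT (half_pos (dist_pos.2 (hx.ne hij)))] with ε hε
    exact Metric.ball_disjoint_ball (by linarith [hε.2])
  obtain ⟨η, ⟨hη₁, hη₂⟩, hη⟩ := ((hinj.and hdisj).and self_mem_nhdsWithin).exists
  exact ⟨η, hη, hη₁, fun i j => hη₂ i j⟩

end Cycles

section FiberAverage

variable {X Y : Type*} {r : X → Y}

/-- The average of `f` over the fibre `r⁻¹(y)`, the transfer operator of `r` at `y`. It is `0` on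
infinite or empty fibres. -/
def fiberAverage (r : X → Y) (f : X → ℝ) (y : Y) : ℝ :=
  (Nat.card (r ⁻¹' {y}) : ℝ)⁻¹ * ∑' x : r ⁻¹' {y}, f x.1

theorem card_fiber_ne_zero_of_fiberAverage_ne_zero {f : X → ℝ} {y : Y}
    (h : fiberAverage r f y ≠ 0) : Nat.card (r ⁻¹' {y}) ≠ 0 := fun h0 =>
  h (by rw [fiberAverage, h0, Nat.cast_zero, _root_.inv_zero, zero_mul])

theorem sum_div_card_fiber_le_fiberAverage {f : X → ℝ} (hf : ∀ x, 0 ≤ f x) {y : Y} {T : Finset X}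
    (hT : ∀ x ∈ T, r x = y) :
    ∑ x ∈ T, f x / Nat.card (r ⁻¹' {y}) ≤ fiberAverage r f y := by
  rcases eq_or_ne (Nat.card (r ⁻¹' {y})) 0 with h0 | h0
  · simp [fiberAverage, h0]
  have hfin : (r ⁻¹' {y}).Finite := Nat.finite_of_card_ne_zero h0
  have hsum : Summable ((r ⁻¹' {y}).indicator f) :=
    summable_of_hasFiniteSupport (hfin.subset Set.support_indicator_subset)
  rw [← Finset.sum_div, div_eq_inv_mul, fiberAverage, tsum_subtype]
  gcongr
  calc ∑ x ∈ T, f x = ∑ x ∈ T, (r ⁻¹' {y}).indicator f x :=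
        Finset.sum_congr rfl fun x hx =>
          (Set.indicator_of_mem (show x ∈ r ⁻¹' {y} from hT x hx) f).symm
    _ ≤ ∑' x, (r ⁻¹' {y}).indicator f x :=
        hsum.sum_le_tsum T fun x _ => Set.indicator_nonneg (fun x _ => hf x) x

end FiberAverage

theorem sum_prod_iterate_le_one {X : Type*} {r : X → X} {w : X → ℝ} (hw : ∀ y, 0 ≤ w y)
    (hsum : ∀ x (T : Finset X), (∀ y ∈ T, r y = x) → ∑ y ∈ T, w y ≤ 1) (n : ℕ) {x : X}
    {T : Finset X} (hT : ∀ y ∈ T, r^[n] y = x) :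
    ∑ y ∈ T, ∏ j ∈ Finset.range n, w (r^[j] y) ≤ 1 := by
  classical
  induction n generalizing T with
  | zero =>
    have hcard : T.card ≤ 1 := Finset.card_le_one.2 fun a ha b hb => (hT a ha).trans (hT b hb).symm
    simpa using hcard
  | succ n ih =>
    have himage : ∀ v ∈ T.image r, r^[n] v = x := Finset.forall_mem_image.2 hT
    refine le_trans ?_ (ih himage)
    rw [← Finset.sum_fiberwise_of_maps_to fun y hy => Finset.mem_image_of_mem r hy]
    refine Finset.sum_le_sum fun v _ => ?_
    calc ∑ y ∈ T with r y = v, ∏ j ∈ Finset.range (n + 1), w (r^[j] y)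
        = (∏ j ∈ Finset.range n, w (r^[j] v)) * ∑ y ∈ T with r y = v, w y := by
          rw [Finset.mul_sum]
          refine Finset.sum_congr rfl fun y hy => ?_
          rw [Finset.prod_range_succ', Function.iterate_zero_apply]
          simp only [Function.iterate_succ_apply, (Finset.mem_filter.1 hy).2]
      _ ≤ ∏ j ∈ Finset.range n, w (r^[j] v) :=
          mul_le_of_le_one_right (Finset.prod_nonneg fun _ _ => hw _)
            (hsum v _ fun y hy => (Finset.mem_filter.1 hy).2)

section InfiniteProduct

variable {R : Type*} [NormedCommRing R] [NormOneClass R] [CompleteSpace R] {a : ℕ → R}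

theorem multipliable_of_summable_norm_sub_one (ha : Summable fun k => ‖a k - 1‖) :
    Multipliable a := by
  simpa only [add_sub_cancel] using multipliable_one_add_of_summable ha

theorem norm_tprod_sub_one_le (ha : Summable fun k => ‖a k - 1‖) :
    ‖∏' k, a k - 1‖ ≤ Real.exp (∑' k, ‖a k - 1‖) - 1 := by
  have hlim := (multipliable_of_summable_norm_sub_one ha).hasProd.tendsto_prod_nat
  refine le_of_tendsto' (hlim.sub_const 1).norm fun n => ?_
  have hle := (Finset.range n).norm_prod_one_add_sub_one_le fun k => a k - 1
  simp only [add_sub_cancel] at hle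
  refine hle.trans ?_
  gcongr
  exact ha.sum_le_tsum _ fun _ _ => norm_nonneg _

theorem tendsto_tprod_nat_add_one (ha : Summable fun k => ‖a k - 1‖) :
    Tendsto (fun n => ∏' k, a (k + n)) atTop (𝓝 1) := by
  have hexp : Tendsto (fun n => Real.exp (∑' k, ‖a (k + n) - 1‖) - 1) atTop (𝓝 0) := by
    simpa only [Real.exp_zero, sub_self] using
      ((tendsto_sum_nat_add fun k => ‖a k - 1‖).rexp).sub_const 1
  rw [tendsto_iff_norm_sub_tendsto_zero]
  exact squeeze_zero (fun _ => norm_nonneg _)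
    (fun n => norm_tprod_sub_one_le ((summable_nat_add_iff n).2 ha)) hexp

end InfiniteProduct

section CycleFactor

variable {X : Type*} {r : X → X} {p : ℕ} {α : ZMod p → ℂ} {m0 : X → ℂ}

/-- The `k`-th factor `α_{i+k}⁻¹ m₀(z_k) / √(#r⁻¹(r(z_k)))` of the product defining the scaling
function on a path `z` of phase `i`; that product starts at `k = 1`. -/
def cycleFactor (r : X → X) (α : ZMod p → ℂ) (m0 : X → ℂ) (z : Solenoid r) (i : ZMod p) (k : ℕ) :
    ℂ :=
  (α (i + k))⁻¹ * m0 (z.1 k) / (Real.sqrt (Nat.card (r ⁻¹' {r (z.1 k)})) : ℂ)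

theorem cycleFactor_shiftHat_succ (z : Solenoid r) (i : ZMod p) (k : ℕ) :
    cycleFactor r α m0 (shiftHat r z) (i - 1) (k + 1) = cycleFactor r α m0 z i k := by
  simp only [cycleFactor, shiftHat, Nat.cast_succ, add_sub_cancel_right, sub_add_add_cancel]

theorem cycleFactor_shiftHatInv_iterate (z : Solenoid r) (i : ZMod p) (n k : ℕ) :
    cycleFactor r α m0 ((shiftHatInv r)^[n] z) (i + n) k = cycleFactor r α m0 z i (k + n) := by
  simp only [cycleFactor, shiftHatInv_iterate_apply, Nat.cast_add, add_comm (k : ZMod p),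
    add_assoc]

end CycleFactor

section LowPassFilter

variable {X : Type*} [MetricSpace X] {r : X → X} {p : ℕ} {xc : ZMod p → X}
  {α : ZMod p → ℂ} {m0 : X → ℂ} {β : ℝ → ℝ}

/-- `m0` is a `β`-Lipschitz low-pass filter for the cycle `xc` with phases `α`. -/
structure IsLowPassFilter (r : X → X) (xc : ZMod p → X) (α : ZMod p → ℂ) (m0 : X → ℂ)
    (β : ℝ → ℝ) : Prop where
  norm_phase : ∀ i, ‖α i‖ = 1
  monotoneOn : MonotoneOn β (Set.Ici 0)
  summable : ∀ A : ℝ, 0 < A → ∀ c : ℝ, 0 < c → c < 1 → Summable fun k : ℕ => β (A * c ^ (k + 1))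
  lipschitz : ∀ i, ∀ᶠ y in 𝓝 (xc i), ‖m0 y - m0 (xc i)‖ ≤ β (dist y (xc i))
  quadrature : ∀ x, fiberAverage r (fun y => ‖m0 y‖ ^ 2) x = 1
  lowPass : ∀ i, m0 (xc i) = α i * (Real.sqrt (Nat.card (r ⁻¹' {r (xc i)})) : ℂ)

namespace IsLowPassFilter

theorem phase_ne_zero (hm : IsLowPassFilter r xc α m0 β) (i : ZMod p) : α i ≠ 0 :=
  norm_ne_zero_iff.1 (by rw [hm.norm_phase]; exact one_ne_zero)

theorem card_fiber_ne_zero (hm : IsLowPassFilter r xc α m0 β) (x : X) :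
    Nat.card (r ⁻¹' {x}) ≠ 0 :=
  card_fiber_ne_zero_of_fiberAverage_ne_zero (by rw [hm.quadrature]; exact one_ne_zero)

theorem sqrt_card_fiber_ne_zero (hm : IsLowPassFilter r xc α m0 β) (x : X) :
    (Real.sqrt (Nat.card (r ⁻¹' {x})) : ℂ) ≠ 0 :=
  Complex.ofReal_ne_zero.2 <| Real.sqrt_ne_zero'.2 <|
    Nat.cast_pos.2 (Nat.pos_of_ne_zero (hm.card_fiber_ne_zero x))

theorem sum_sq_div_card_le_one (hm : IsLowPassFilter r xc α m0 β) (x : X) (T : Finset X)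
    (hT : ∀ y ∈ T, r y = x) : ∑ y ∈ T, ‖m0 y‖ ^ 2 / Nat.card (r ⁻¹' {r y}) ≤ 1 := by
  rw [← hm.quadrature x, Finset.sum_congr rfl fun y hy => by rw [hT y hy]]
  exact sum_div_card_fiber_le_fiberAverage (fun _ => sq_nonneg _) hT

theorem norm_sq_cycle (hm : IsLowPassFilter r xc α m0 β) (i : ZMod p) :
    ‖m0 (xc i)‖ ^ 2 = Nat.card (r ⁻¹' {r (xc i)}) := by
  rw [hm.lowPass, norm_mul, hm.norm_phase, one_mul, Complex.norm_real, Real.norm_eq_abs, sq_abs,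
    Real.sq_sqrt (Nat.cast_nonneg _)]

theorem continuousAt (hm : IsLowPassFilter r xc α m0 β) (i : ZMod p) :
    ContinuousAt m0 (xc i) := by
  have hβ := (hm.summable 1 one_pos 2⁻¹ (by norm_num) (by norm_num)).tendsto_atTop_zero
  rw [Metric.continuousAt_iff']
  intro ε hε
  obtain ⟨k, hk⟩ := (hβ.eventually_lt_const hε).exists
  filter_upwards [hm.lipschitz i,
    Metric.ball_mem_nhds (xc i) (show (0 : ℝ) < 1 * 2⁻¹ ^ (k + 1) by positivity)] with y hy hball
  rw [dist_eq_norm]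
  calc ‖m0 y - m0 (xc i)‖ ≤ β (dist y (xc i)) := hy
    _ ≤ β (1 * 2⁻¹ ^ (k + 1)) :=
      hm.monotoneOn dist_nonneg (Set.mem_Ici.2 (by positivity)) (Metric.mem_ball.1 hball).le
    _ < ε := hk

-- Each point near `xc i` takes more than half of the quadrature mass of its fibre.
theorem exists_injOn_ball (hm : IsLowPassFilter r xc α m0 β) (hC : IsRepellingCycle r xc)
    (i : ZMod p) : ∃ η > 0, Set.InjOn r (Metric.ball (xc i) η) := by
  have hN : (0 : ℝ) < Nat.card (r ⁻¹' {r (xc i)}) :=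
    Nat.cast_pos.2 (Nat.pos_of_ne_zero (hm.card_fiber_ne_zero _))
  have hhalf : ∀ᶠ y in 𝓝 (xc i), 1 / 2 < ‖m0 y‖ ^ 2 / Nat.card (r ⁻¹' {r y}) := by
    have hlarge : ∀ᶠ y in 𝓝 (xc i), (Nat.card (r ⁻¹' {r (xc i)}) : ℝ) / 2 < ‖m0 y‖ ^ 2 :=
      ((hm.continuousAt i).norm.pow 2).eventually_const_lt
        ((half_lt_self hN).trans_eq (hm.norm_sq_cycle i).symm)
    filter_upwards [hlarge, hC.eventually_card_fiber_eq i] with y hy hcard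
    rw [hcard, lt_div_iff₀ hN]
    linarith
  obtain ⟨η, hη, hball⟩ := Metric.eventually_nhds_iff_ball.1 hhalf
  refine ⟨η, hη, fun y hy y' hy' hyy' => by_contra fun hne => ?_⟩
  classical
  have hle := hm.sum_sq_div_card_le_one (r y) {y, y'} (by simp [hyy'])
  rw [Finset.sum_pair hne] at hle
  linarith [hball y hy, hball y' hy']

theorem norm_sq_cycleFactor (hm : IsLowPassFilter r xc α m0 β) (z : Solenoid r) (i : ZMod p)
    (k : ℕ) : ‖cycleFactor r α m0 z i k‖ ^ 2 = ‖m0 (z.1 k)‖ ^ 2 / Nat.card (r ⁻¹' {r (z.1 k)}) := by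
  rw [cycleFactor, norm_div, norm_mul, norm_inv, hm.norm_phase, inv_one, one_mul,
    Complex.norm_real, Real.norm_eq_abs, div_pow, sq_abs, Real.sq_sqrt (Nat.cast_nonneg _)]

theorem norm_normalized_sub_one_le (hm : IsLowPassFilter r xc α m0 β) (i : ZMod p) (w : ℂ) :
    ‖(α i)⁻¹ * w / (Real.sqrt (Nat.card (r ⁻¹' {r (xc i)})) : ℂ) - 1‖ ≤ ‖w - m0 (xc i)‖ := by
  have hα := hm.phase_ne_zero i
  have hsqrt := hm.sqrt_card_fiber_ne_zero (r (xc i))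
  have hfactor : (α i)⁻¹ * w / (Real.sqrt (Nat.card (r ⁻¹' {r (xc i)})) : ℂ) - 1 =
      (α i)⁻¹ * (w - m0 (xc i)) / (Real.sqrt (Nat.card (r ⁻¹' {r (xc i)})) : ℂ) := by
    rw [hm.lowPass i]
    field_simp
  rw [hfactor, norm_div, norm_mul, norm_inv, hm.norm_phase, inv_one, one_mul, Complex.norm_real,
    Real.norm_of_nonneg (Real.sqrt_nonneg _)]
  exact div_le_self (norm_nonneg _) <| Real.one_le_sqrt.2 <|
    Nat.one_le_cast.2 (Nat.one_le_iff_ne_zero.2 (hm.card_fiber_ne_zero _))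

theorem summable_norm_cycleFactor_sub_one [NeZero p] (hm : IsLowPassFilter r xc α m0 β)
    (hC : IsRepellingCycle r xc) {z : Solenoid r} {i : ZMod p} (h : FollowsCycle xc z i) :
    Summable fun k => ‖cycleFactor r α m0 z i k - 1‖ := by
  obtain ⟨A, b, hA, hb0, hb1, hgeom⟩ := h.eventually_dist_le_geometric hC
  refine .of_norm_bounded_eventually_nat (hm.summable A hA b hb0 hb1) ?_
  filter_upwards [hgeom, h.eventually_forall_nhds hm.lipschitz,
    h.eventually_forall_nhds hC.eventually_card_fiber_eq] with k hdist hlip hcard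
  rw [norm_norm, cycleFactor, hcard]
  calc _ ≤ ‖m0 (z.1 k) - m0 (xc (i + k))‖ := hm.norm_normalized_sub_one_le _ _
    _ ≤ β (dist (z.1 k) (xc (i + k))) := hlip
    _ ≤ β (A * b ^ (k + 1)) :=
      hm.monotoneOn dist_nonneg (Set.mem_Ici.2 (by positivity)) hdist

end IsLowPassFilter

end LowPassFilter

theorem Solenoid.eventually_injOn_apply {X : Type*} {r : X → X} (T : Finset (Solenoid r)) :
    ∀ᶠ n : ℕ in atTop, Set.InjOn (fun z : Solenoid r => z.1 n) T := by
  refine (eventually_all_finset T).2 fun z _ => (eventually_all_finset T).2 fun w _ => ?_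
  rcases eq_or_ne z w with rfl | hzw
  · exact Eventually.of_forall fun _ _ => rfl
  obtain ⟨m, hm⟩ : ∃ m : ℕ, z.1 m ≠ w.1 m := not_forall.1 (mt ext_of_nat hzw)
  filter_upwards [eventually_ge_atTop m] with n hn hzw_n
  exact absurd (apply_eq_of_le hn hzw_n) hm

theorem sum_prod_apply_le_one {X : Type*} {r : X → X} {w : X → ℝ} (hw : ∀ y, 0 ≤ w y)
    (hsum : ∀ x (T : Finset X), (∀ y ∈ T, r y = x) → ∑ y ∈ T, w y ≤ 1) {x : X}
    {T : Finset (Solenoid r)} (hT : ∀ z ∈ T, z.1 0 = x) {n : ℕ}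
    (hn : Set.InjOn (fun z : Solenoid r => z.1 n) T) :
    ∑ z ∈ T, ∏ k ∈ Finset.range n, w (z.1 (k + 1 : ℕ)) ≤ 1 := by
  classical
  have hreflect (z : Solenoid r) : ∏ k ∈ Finset.range n, w (z.1 (k + 1 : ℕ)) =
      ∏ j ∈ Finset.range n, w (r^[j] (z.1 n)) := by
    rw [← Finset.prod_range_reflect]
    refine Finset.prod_congr rfl fun j hj => ?_
    have hj : ((n - 1 - j + 1 : ℕ) : ℤ) + j = n := by have := Finset.mem_range.1 hj; omega
    rw [← iterate_apply z j, hj]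
  simp only [hreflect]
  rw [← Finset.sum_image (f := fun y => ∏ j ∈ Finset.range n, w (r^[j] y)) hn]
  refine sum_prod_iterate_le_one hw hsum n (x := x) (Finset.forall_mem_image.2 fun z hz => ?_)
  have hz0 := iterate_apply z n 0
  rwa [zero_add, hT z hz] at hz0

section ScalingFunction

variable {X : Type*} [MetricSpace X] {r : X → X} {p : ℕ} [NeZero p] {xc : ZMod p → X}
  {α : ZMod p → ℂ} {m0 : X → ℂ} {β : ℝ → ℝ} {ι : Solenoid r → ZMod p}

theorem scalingFn_eq_tprod_cycleFactor (hC : IsRepellingCycle r xc) (hι : IsLimitIndex r xc ι)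
    {z : Solenoid r} {i : ZMod p} (h : FollowsCycle xc z i) :
    scalingFn r α ι m0 z = ∏' k, cycleFactor r α m0 z i (k + 1) := by
  rw [← hι.eq_of_followsCycle hC h]
  rfl

namespace IsLowPassFilter

theorem multipliable_cycleFactor_succ (hm : IsLowPassFilter r xc α m0 β)
    (hC : IsRepellingCycle r xc) {z : Solenoid r} {i : ZMod p} (h : FollowsCycle xc z i) :
    Multipliable fun k => cycleFactor r α m0 z i (k + 1) :=
  multipliable_of_summable_norm_sub_one <|
    (summable_nat_add_iff 1).2 (hm.summable_norm_cycleFactor_sub_one hC h)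

theorem scalingFn_shiftHat (hm : IsLowPassFilter r xc α m0 β) (hC : IsRepellingCycle r xc)
    (hι : IsLimitIndex r xc ι) {z : Solenoid r} {i : ZMod p} (h : FollowsCycle xc z i) :
    α (ι z) * (Real.sqrt (Nat.card (r ⁻¹' {r (z.1 0)})) : ℂ) * scalingFn r α ι m0 (shiftHat r z) =
      m0 (z.1 0) * scalingFn r α ι m0 z := by
  have hfactor : scalingFn r α ι m0 (shiftHat r z) =
      cycleFactor r α m0 z i 0 * scalingFn r α ι m0 z := by
    rw [scalingFn_eq_tprod_cycleFactor hC hι h, scalingFn_eq_tprod_cycleFactor hC hι h.shiftHat,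
      ← tprod_eq_zero_mul' (hm.multipliable_cycleFactor_succ hC h)]
    simp only [cycleFactor_shiftHat_succ]
  have hα := hm.phase_ne_zero i
  have hsqrt := hm.sqrt_card_fiber_ne_zero (r (z.1 0))
  rw [hfactor, hι.eq_of_followsCycle hC h, cycleFactor, Nat.cast_zero, Nat.cast_zero, add_zero]
  field_simp

theorem tendsto_scalingFn_shiftHatInv_iterate (hm : IsLowPassFilter r xc α m0 β)
    (hC : IsRepellingCycle r xc) (hι : IsLimitIndex r xc ι) {z : Solenoid r} {i : ZMod p}
    (h : FollowsCycle xc z i) :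
    Tendsto (fun n => scalingFn r α ι m0 ((shiftHatInv r)^[n] z)) atTop (𝓝 1) := by
  have hsum := (summable_nat_add_iff 1).2 (hm.summable_norm_cycleFactor_sub_one hC h)
  refine (tendsto_tprod_nat_add_one hsum).congr fun n => ?_
  rw [scalingFn_eq_tprod_cycleFactor hC hι (h.shiftHatInv_iterate n)]
  simp only [cycleFactor_shiftHatInv_iterate, add_right_comm]

theorem sum_norm_sq_scalingFn_le_one (hm : IsLowPassFilter r xc α m0 β)
    (hC : IsRepellingCycle r xc) (hι : IsLimitIndex r xc ι) {x : X} {T : Finset (Solenoid r)}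
    (hT : ∀ z ∈ T, z ∈ NC r xc x) : ∑ z ∈ T, ‖scalingFn r α ι m0 z‖ ^ 2 ≤ 1 := by
  have hpartial : Tendsto
      (fun n => ∑ z ∈ T, ∏ k ∈ Finset.range n,
        ‖m0 (z.1 (k + 1 : ℕ))‖ ^ 2 / (Nat.card (r ⁻¹' {r (z.1 (k + 1 : ℕ))}) : ℝ))
      atTop (𝓝 (∑ z ∈ T, ‖scalingFn r α ι m0 z‖ ^ 2)) := by
    refine tendsto_finsetSum T fun z hz => ?_
    obtain ⟨i, h⟩ := (hC.mem_NC_iff.1 (hT z hz)).2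
    have hmult := hm.multipliable_cycleFactor_succ hC h
    rw [scalingFn_eq_tprod_cycleFactor hC hι h]
    refine (hmult.hasProd.tendsto_prod_nat.norm.pow 2).congr fun n => ?_
    rw [norm_prod, ← Finset.prod_pow]
    exact Finset.prod_congr rfl fun k _ => hm.norm_sq_cycleFactor z i (k + 1)
  refine le_of_tendsto hpartial ((eventually_injOn_apply T).mono fun n hn => ?_)
  exact sum_prod_apply_le_one (w := fun y => ‖m0 y‖ ^ 2 / (Nat.card (r ⁻¹' {r y}) : ℝ))
    (fun y => by positivity) hm.sum_sq_div_card_le_one (fun z hz => (hT z hz).1) hn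

theorem tsum_enorm_sq_scalingFn_le_one (hm : IsLowPassFilter r xc α m0 β)
    (hC : IsRepellingCycle r xc) (hι : IsLimitIndex r xc ι) (x : X) :
    ∑' ω : NC r xc x, ‖scalingFn r α ι m0 ω.1‖ₑ ^ 2 ≤ 1 := by
  rw [ENNReal.tsum_eq_iSup_sum]
  refine iSup_le fun T => ?_
  have hle := hm.sum_norm_sq_scalingFn_le_one hC hι (x := x)
    (T := T.map (Function.Embedding.subtype _)) (Finset.forall_mem_map.2 fun ω _ => ω.2)
  rw [Finset.sum_map] at hle
  calc ∑ ω ∈ T, ‖scalingFn r α ι m0 ω.1‖ₑ ^ 2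
      = ENNReal.ofReal (∑ ω ∈ T, ‖scalingFn r α ι m0 ω.1‖ ^ 2) := by
        rw [ENNReal.ofReal_sum_of_nonneg fun _ _ => sq_nonneg _]
        simp only [ENNReal.ofReal_pow (norm_nonneg _), ofReal_norm]
    _ ≤ 1 := ENNReal.ofReal_le_one.2 hle

end IsLowPassFilter

end ScalingFunction

section ShadowingPaths

variable {X : Type*} [MetricSpace X] {r : X → X} {p : ℕ} {xc : ZMod p → X} {η : ℝ}

/-- The paths asymptotic to the cycle that stay within distance `η` of it at all nonnegative
times. -/
def shadowingPaths (r : X → X) (xc : ZMod p → X) (η : ℝ) : Set (Solenoid r) :=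
  {z | ∃ i, FollowsCycle xc z i ∧ ∀ k : ℕ, dist (z.1 k) (xc (i + k)) < η}

theorem FollowsCycle.eventually_mem_shadowingPaths {z : Solenoid r} {i : ZMod p}
    (h : FollowsCycle xc z i) (hη : 0 < η) :
    ∀ᶠ n : ℕ in atTop, (shiftHatInv r)^[n] z ∈ shadowingPaths r xc η := by
  obtain ⟨N, hN⟩ := eventually_atTop.1 (h.eventually_lt_const hη)
  filter_upwards [eventually_ge_atTop N] with n hn
  refine ⟨i + n, h.shiftHatInv_iterate n, fun k => ?_⟩
  have hk := hN (k + n) (hn.trans (Nat.le_add_left n k))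
  rwa [Nat.cast_add, Nat.cast_add, add_comm (k : ZMod p), ← add_assoc,
    ← shiftHatInv_iterate_apply] at hk

theorem injOn_apply_zero_shadowingPaths (hinj : ∀ i, Set.InjOn r (Metric.ball (xc i) η))
    (hdisj : Pairwise (Function.onFun Disjoint fun i => Metric.ball (xc i) η)) :
    Set.InjOn (fun z : Solenoid r => z.1 0) (shadowingPaths r xc η) := by
  rintro z ⟨i, -, hz⟩ w ⟨j, -, hw⟩ (hzw : z.1 0 = w.1 0)
  have hzi : z.1 0 ∈ Metric.ball (xc i) η := by simpa using hz 0
  have hwj : w.1 0 ∈ Metric.ball (xc j) η := by simpa using hw 0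
  obtain rfl : i = j := by_contra fun hij =>
    Set.disjoint_left.1 (hdisj hij) hzi (hzw ▸ hwj)
  refine ext_of_nat fun n => ?_
  induction n with
  | zero => exact hzw
  | succ n ih =>
    refine hinj _ (hz (n + 1)) (hw (n + 1)) ?_
    rw [Nat.cast_succ, z.2, w.2, ih]

theorem IsLowPassFilter.exists_injOn_shadowingPaths [NeZero p] {α : ZMod p → ℂ} {m0 : X → ℂ}
    {β : ℝ → ℝ} (hm : IsLowPassFilter r xc α m0 β) (hC : IsRepellingCycle r xc) :
    ∃ η > 0, Set.InjOn (fun z : Solenoid r => z.1 0) (shadowingPaths r xc η) := by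
  obtain ⟨η, hη, hinj, hdisj⟩ := exists_radius_injOn_disjoint hC.injective (hm.exists_injOn_ball hC)
  exact ⟨η, hη, injOn_apply_zero_shadowingPaths hinj hdisj⟩

theorem IsRepellingCycle.setOf_exists_mem_NC_eq_iUnion [NeZero p] (hC : IsRepellingCycle r xc)
    (hη : 0 < η) (N : Set (Solenoid r)) :
    {x | ∃ z ∈ NC r xc x, z ∈ N} = ⋃ n : ℕ, r^[n] '' ((fun z : Solenoid r => z.1 0) ''
      (shadowingPaths r xc η ∩
        (shiftHat r)^[n] ⁻¹' (N ∩ {z | ∃ i, FollowsCycle xc z i}))) := by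
  ext x
  simp only [hC.mem_NC_iff, Set.mem_ofPred_eq, Set.mem_iUnion, Set.image_image]
  constructor
  · rintro ⟨z, ⟨rfl, i, hi⟩, hz⟩
    obtain ⟨n, hn⟩ := (hi.eventually_mem_shadowingPaths hη).exists
    refine ⟨n, (shiftHatInv r)^[n] z, ⟨hn, ?_⟩, shiftHatInv_iterate_apply_zero z n⟩
    rw [Set.mem_preimage, (leftInverse_shiftHat.iterate n) z]
    exact ⟨hz, i, hi⟩
  · rintro ⟨n, z, ⟨-, hzN, hi⟩, rfl⟩
    refine ⟨(shiftHat r)^[n] z, ⟨?_, hi⟩, hzN⟩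
    rw [← shiftHatInv_iterate_apply_zero ((shiftHat r)^[n] z) n,
      (leftInverse_shiftHatInv.iterate n) z]

end ShadowingPaths

section FiberAverageIndicator

variable {X Y : Type*} {r : X → Y} {y : Y}

theorem fiberAverage_nonneg {f : X → ℝ} (hf : ∀ x, 0 ≤ f x) : 0 ≤ fiberAverage r f y :=
  mul_nonneg (inv_nonneg.2 (Nat.cast_nonneg _)) (tsum_nonneg fun _ => hf _)

theorem fiberAverage_comp (hcard : Nat.card (r ⁻¹' {y}) ≠ 0) (g : Y → ℝ) :
    fiberAverage r (g ∘ r) y = g y := by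
  have : Finite (r ⁻¹' {y}) := Nat.finite_of_card_ne_zero hcard
  have := Fintype.ofFinite (r ⁻¹' {y})
  have hconst : ∀ x : r ⁻¹' {y}, (g ∘ r) x = g y := fun x => congrArg g x.2
  rw [fiberAverage, tsum_congr hconst, tsum_fintype, Finset.sum_const, Finset.card_univ,
    ← Nat.card_eq_fintype_card, nsmul_eq_mul, inv_mul_cancel_left₀ (Nat.cast_ne_zero.2 hcard)]

theorem fiberAverage_add (hcard : Nat.card (r ⁻¹' {y}) ≠ 0) (f g : X → ℝ) :
    fiberAverage r (f + g) y = fiberAverage r f y + fiberAverage r g y := by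
  have : Finite (r ⁻¹' {y}) := Nat.finite_of_card_ne_zero hcard
  simp only [fiberAverage, Pi.add_apply]
  rw [Summable.tsum_add .of_finite .of_finite, mul_add]

theorem fiberAverage_indicator_add_compl (hcard : Nat.card (r ⁻¹' {y}) ≠ 0) (A : Set X) :
    fiberAverage r (A.indicator 1) y + fiberAverage r (Aᶜ.indicator 1) y = 1 := by
  rw [← fiberAverage_add hcard, Set.indicator_self_add_compl]
  exact fiberAverage_comp hcard 1

theorem fiberAverage_indicator_ne_zero_iff (hcard : Nat.card (r ⁻¹' {y}) ≠ 0) {A : Set X} :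
    fiberAverage r (A.indicator 1) y ≠ 0 ↔ y ∈ r '' A := by
  have : Finite (r ⁻¹' {y}) := Nat.finite_of_card_ne_zero hcard
  have hnonneg : ∀ x : r ⁻¹' {y}, 0 ≤ A.indicator (1 : X → ℝ) x :=
    fun x => Set.indicator_nonneg (fun _ _ => zero_le_one) _
  have := Fintype.ofFinite (r ⁻¹' {y})
  rw [fiberAverage, mul_ne_zero_iff_left (inv_ne_zero (Nat.cast_ne_zero.2 hcard)), tsum_fintype,
    ne_eq, Finset.sum_eq_zero_iff_of_nonneg fun x _ => hnonneg x]
  simp [and_comm]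

end FiberAverageIndicator

section StronglyInvariant

variable {X : Type*} [MeasurableSpace X] {r : X → X} {ρ : Measure X}

/-- The measure `ρ` is strongly invariant under `r`: averaging a bounded measurable function over
the fibres of `r` does not change its integral. -/
def StronglyInvariant (r : X → X) (ρ : Measure X) : Prop :=
  ∀ f : X → ℝ, Measurable f → (∃ M : ℝ, ∀ x, |f x| ≤ M) →
    ∫ x, f x ∂ρ = ∫ x, fiberAverage r f x ∂ρ

namespace StronglyInvariant

theorem integral_fiberAverage_indicator (hρ : StronglyInvariant r ρ) {A : Set X}
    (hA : MeasurableSet A) : ∫ x, fiberAverage r (A.indicator 1) x ∂ρ = ρ.real A := by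
  have hbound (x : X) : |A.indicator (1 : X → ℝ) x| ≤ 1 := by
    by_cases hx : x ∈ A <;> simp [hx]
  rw [← integral_indicator_one hA, hρ _ (measurable_one.indicator hA) ⟨1, hbound⟩]

variable [IsFiniteMeasure ρ]

-- Otherwise the fibre averages of `A` and of `Aᶜ` both have the junk integral `0`, forcing `ρ = 0`.
theorem aestronglyMeasurable_fiberAverage_indicator (hρ : StronglyInvariant r ρ)
    (hcard : ∀ x, Nat.card (r ⁻¹' {x}) ≠ 0) {A : Set X} (hA : MeasurableSet A) :
    AEStronglyMeasurable (fiberAverage r (A.indicator 1)) ρ := by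
  by_contra hcon
  have hsub : fiberAverage r (A.indicator 1) = 1 - fiberAverage r (Aᶜ.indicator 1) :=
    funext fun x => eq_sub_of_add_eq (fiberAverage_indicator_add_compl (hcard x) A)
  have hcompl : ¬ AEStronglyMeasurable (fiberAverage r (Aᶜ.indicator 1)) ρ := fun h =>
    hcon (hsub ▸ aestronglyMeasurable_one.sub h)
  have hA0 := hρ.integral_fiberAverage_indicator hA
  have hAc0 := hρ.integral_fiberAverage_indicator hA.compl
  rw [integral_non_aestronglyMeasurable hcon] at hA0
  rw [integral_non_aestronglyMeasurable hcompl] at hAc0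
  have huniv : ρ.real Set.univ = 0 := by
    rw [← measureReal_add_measureReal_compl hA, ← hA0, ← hAc0, add_zero]
  have hρ0 : ρ = 0 := Measure.measure_univ_eq_zero.1 ((measureReal_eq_zero_iff).1 huniv)
  exact hcon (hρ0 ▸ aestronglyMeasurable_zero_measure _)

theorem measurePreserving (hρ : StronglyInvariant r ρ) (hcard : ∀ x, Nat.card (r ⁻¹' {x}) ≠ 0)
    (hr : Measurable r) : MeasurePreserving r ρ ρ := by
  refine ⟨hr, Measure.ext fun A hA => ?_⟩
  rw [Measure.map_apply hr hA, ← measureReal_eq_measureReal_iff,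
    ← hρ.integral_fiberAverage_indicator (hr hA), ← integral_indicator_one hA]
  exact integral_congr_ae <| .of_forall fun x => fiberAverage_comp (hcard x) (A.indicator 1)

theorem measure_image_eq_zero (hρ : StronglyInvariant r ρ) (hcard : ∀ x, Nat.card (r ⁻¹' {x}) ≠ 0)
    {Z : Set X} (hZ : ρ Z = 0) : ρ (r '' Z) = 0 := by
  obtain ⟨A, hZA, hA, hA0⟩ := exists_measurable_superset_of_null hZ
  have hnonneg (B : Set X) (x : X) : 0 ≤ fiberAverage r (B.indicator 1) x :=
    fiberAverage_nonneg (Set.indicator_nonneg fun _ _ => zero_le_one)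
  have hint : Integrable (fiberAverage r (A.indicator 1)) ρ := by
    refine .of_bound (hρ.aestronglyMeasurable_fiberAverage_indicator hcard hA) 1
      (.of_forall fun x => ?_)
    rw [Real.norm_of_nonneg (hnonneg A x)]
    linarith [fiberAverage_indicator_add_compl (hcard x) A, hnonneg Aᶜ x]
  have hzero := hρ.integral_fiberAverage_indicator hA
  rw [Measure.real, hA0, ENNReal.toReal_zero,
    integral_eq_zero_iff_of_nonneg (hnonneg A) hint] at hzero
  refine measure_mono_null (fun x hx => ?_) (ae_iff.1 hzero)
  exact (fiberAverage_indicator_ne_zero_iff (hcard x)).2 (Set.image_mono hZA hx)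

theorem nullMeasurableSet_image (hρ : StronglyInvariant r ρ)
    (hcard : ∀ x, Nat.card (r ⁻¹' {x}) ≠ 0) {A : Set X} (hA : NullMeasurableSet A ρ) :
    NullMeasurableSet (r '' A) ρ := by
  obtain ⟨B, hBA, hB, hae⟩ := hA.exists_measurable_subset_ae_eq
  have himage : r '' B = {x | fiberAverage r (B.indicator 1) x ≠ 0} :=
    Set.ext fun x => (fiberAverage_indicator_ne_zero_iff (hcard x)).symm
  rw [← Set.union_sdiff_cancel hBA, Set.image_union, himage]
  refine .union ?_ (.of_null (hρ.measure_image_eq_zero hcard (ae_le_set.1 hae.symm.le)))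
  exact (hρ.aestronglyMeasurable_fiberAverage_indicator hcard hB).aemeasurable.nullMeasurable
    (measurableSet_singleton (0 : ℝ)).compl

theorem nullMeasurableSet_image_iterate (hρ : StronglyInvariant r ρ)
    (hcard : ∀ x, Nat.card (r ⁻¹' {x}) ≠ 0) (n : ℕ) {A : Set X} (hA : NullMeasurableSet A ρ) :
    NullMeasurableSet (r^[n] '' A) ρ := by
  induction n with
  | zero => rwa [Function.iterate_zero, Set.image_id]
  | succ n ih =>
    rw [Function.iterate_succ', Set.image_comp]
    exact hρ.nullMeasurableSet_image hcard ih

end StronglyInvariant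

end StronglyInvariant

section PathMeasure

variable {X : Type*} [MeasurableSpace X] {r : X → X}

theorem Solenoid.measurable_apply (k : ℤ) : Measurable fun z : Solenoid r => z.1 k :=
  (measurable_pi_apply k).comp measurable_subtype_coe

theorem measurable_shiftHat : Measurable (shiftHat r) :=
  (measurable_pi_lambda _ fun n => Solenoid.measurable_apply (n - 1)).subtype_mk

theorem measurable_shiftHatInv : Measurable (shiftHatInv r) :=
  (measurable_pi_lambda _ fun n => Solenoid.measurable_apply (n + 1)).subtype_mk

theorem Solenoid.standardBorelSpace [StandardBorelSpace X] (hr : Measurable r) :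
    StandardBorelSpace (Solenoid r) := by
  have hset : MeasurableSet {z : ℤ → X | ∀ n : ℤ, r (z (n + 1)) = z n} := by
    rw [Set.ofPred_forall]
    exact .iInter fun n =>
      measurableSet_eq_fun (hr.comp (measurable_pi_apply _)) (measurable_pi_apply _)
  exact hset.standardBorel

variable [MetricSpace X] {p : ℕ} {xc : ZMod p → X}

section OpensMeasurableSpace

variable [OpensMeasurableSpace X]

theorem measurable_dist_apply (k : ℤ) (x : X) :
    Measurable fun z : Solenoid r => dist (z.1 k) x :=
  (continuous_id.dist continuous_const).measurable.comp (Solenoid.measurable_apply k)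

theorem measurableSet_followsCycle (i : ZMod p) :
    MeasurableSet {z : Solenoid r | FollowsCycle xc z i} :=
  measurableSet_tendsto _ fun _ => measurable_dist_apply _ _

theorem measurableSet_exists_followsCycle [NeZero p] :
    MeasurableSet {z : Solenoid r | ∃ i, FollowsCycle xc z i} := by
  rw [Set.ofPred_exists]
  exact .iUnion measurableSet_followsCycle

theorem measurableSet_shadowingPaths [NeZero p] (η : ℝ) :
    MeasurableSet (shadowingPaths r xc η) := by
  have hη : shadowingPaths r xc η = ⋃ i, {z : Solenoid r | FollowsCycle xc z i} ∩
      ⋂ k : ℕ, {z : Solenoid r | dist (z.1 k) (xc (i + k)) < η} := by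
    ext z
    simp [shadowingPaths]
  rw [hη]
  exact .iUnion fun i => (measurableSet_followsCycle i).inter <| .iInter fun k =>
    measurableSet_lt (measurable_dist_apply _ _) measurable_const

end OpensMeasurableSpace

/-- The measure `lamC` on the solenoid is counting measure on the paths `N_C(x)` from each point
`x`, integrated against `ρ`. -/
def IsPathMeasure (r : X → X) (xc : ZMod p → X) (ρ : Measure X) (lamC : Measure (Solenoid r)) :
    Prop :=
  ∀ F : Solenoid r → ℝ≥0∞, Measurable F →
    ∫⁻ z, F z ∂lamC = ∫⁻ x, ∑' ω : NC r xc x, F ω.1 ∂ρ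

variable {ρ : Measure X} {lamC : Measure (Solenoid r)} {N : Set (Solenoid r)}

theorem IsPathMeasure.measure_eq_zero (hlam : IsPathMeasure r xc ρ lamC) (hN : MeasurableSet N)
    (h : ∀ᵐ x ∂ρ, ∀ z ∈ NC r xc x, z ∉ N) : lamC N = 0 := by
  rw [← lintegral_indicator_one hN, hlam _ (measurable_one.indicator hN), ← lintegral_zero (μ := ρ)]
  refine lintegral_congr_ae (h.mono fun x hx => ENNReal.tsum_eq_zero.2 fun z => ?_)
  exact Set.indicator_of_notMem (hx z z.2) 1

theorem IsPathMeasure.ae_exists_followsCycle [OpensMeasurableSpace X] [NeZero p]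
    (hlam : IsPathMeasure r xc ρ lamC) (hC : IsRepellingCycle r xc) :
    ∀ᵐ z ∂lamC, ∃ i, FollowsCycle xc z i :=
  hlam.measure_eq_zero measurableSet_exists_followsCycle.compl <| .of_forall fun _ _ hz =>
    not_not.2 (hC.mem_NC_iff.1 hz).2

variable [BorelSpace X] [StandardBorelSpace X] [IsFiniteMeasure ρ] [NeZero p] {α : ZMod p → ℂ}
  {m0 : X → ℂ} {β : ℝ → ℝ}

-- Shifting a path far enough along itself brings it into a set of shadowing paths, on which the
-- zeroth coordinate is injective; images of Borel sets under injective Borel maps are Borel.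
theorem StronglyInvariant.nullMeasurableSet_setOf_exists_mem_NC (hρ : StronglyInvariant r ρ)
    (hr : Measurable r) (hC : IsRepellingCycle r xc) (hm : IsLowPassFilter r xc α m0 β)
    (hN : MeasurableSet N) : NullMeasurableSet {x | ∃ z ∈ NC r xc x, z ∈ N} ρ := by
  obtain ⟨η, hη, hinj⟩ := hm.exists_injOn_shadowingPaths hC
  have := Solenoid.standardBorelSpace hr
  rw [hC.setOf_exists_mem_NC_eq_iUnion hη]
  refine .iUnion fun n => hρ.nullMeasurableSet_image_iterate hm.card_fiber_ne_zero n
    (MeasurableSet.nullMeasurableSet ?_)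
  refine MeasurableSet.image_of_measurable_injOn ?_ (Solenoid.measurable_apply 0)
    (hinj.mono Set.inter_subset_left)
  exact (measurableSet_shadowingPaths η).inter
    (measurable_shiftHat.iterate n (hN.inter measurableSet_exists_followsCycle))

theorem IsPathMeasure.ae_forall_mem_NC (hlam : IsPathMeasure r xc ρ lamC)
    (hρ : StronglyInvariant r ρ) (hr : Measurable r) (hC : IsRepellingCycle r xc)
    (hm : IsLowPassFilter r xc α m0 β)
    {P : Solenoid r → Prop} (h : ∀ᵐ z ∂lamC, P z) :
    ∀ᵐ x ∂ρ, ∀ z ∈ NC r xc x, P z := by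
  obtain ⟨N, hPN, hN, hN0⟩ := exists_measurable_superset_of_null (ae_iff.1 h)
  have hA := hρ.nullMeasurableSet_setOf_exists_mem_NC hr hC hm hN
  have hle : ρ {x | ∃ z ∈ NC r xc x, z ∈ N} ≤ lamC N := by
    rw [← lintegral_indicator_one₀ hA, ← lintegral_indicator_one hN,
      hlam _ (measurable_one.indicator hN)]
    refine lintegral_mono (Set.indicator_le fun x ⟨z, hz, hzN⟩ => ?_)
    refine le_trans ?_ (ENNReal.le_tsum (⟨z, hz⟩ : NC r xc x))
    rw [Set.indicator_of_mem hzN]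
    rfl
  filter_upwards [measure_eq_zero_iff_ae_notMem.1 (le_antisymm (hle.trans hN0.le) bot_le)]
    with x hx z hz
  by_contra hzP
  exact hx ⟨z, hz, hPN hzP⟩

theorem IsPathMeasure.quasiMeasurePreserving_shiftHat (hlam : IsPathMeasure r xc ρ lamC)
    (hρ : StronglyInvariant r ρ) (hr : Measurable r) (hC : IsRepellingCycle r xc)
    (hm : IsLowPassFilter r xc α m0 β) :
    Measure.QuasiMeasurePreserving (shiftHat r) lamC lamC := by
  refine ⟨measurable_shiftHat, .mk fun N hN hN0 => ?_⟩
  rw [Measure.map_apply measurable_shiftHat hN]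
  refine hlam.measure_eq_zero (measurable_shiftHat hN) ?_
  have hpre := (hρ.measurePreserving hm.card_fiber_ne_zero hr).quasiMeasurePreserving.ae
    (hlam.ae_forall_mem_NC hρ hr hC hm (measure_eq_zero_iff_ae_notMem.1 hN0))
  filter_upwards [hpre] with x hx z hz
  exact hx _ (hC.shiftHat_mem_NC hz)

theorem IsPathMeasure.quasiMeasurePreserving_shiftHatInv (hlam : IsPathMeasure r xc ρ lamC)
    (hρ : StronglyInvariant r ρ) (hr : Measurable r) (hC : IsRepellingCycle r xc)
    (hm : IsLowPassFilter r xc α m0 β) :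
    Measure.QuasiMeasurePreserving (shiftHatInv r) lamC lamC := by
  refine ⟨measurable_shiftHatInv, .mk fun N hN hN0 => ?_⟩
  rw [Measure.map_apply measurable_shiftHatInv hN]
  refine hlam.measure_eq_zero (measurable_shiftHatInv hN) ?_
  have himage := hρ.measure_image_eq_zero hm.card_fiber_ne_zero
    (ae_iff.1 (hlam.ae_forall_mem_NC hρ hr hC hm (measure_eq_zero_iff_ae_notMem.1 hN0)))
  filter_upwards [measure_eq_zero_iff_ae_notMem.1 himage] with x hx z hz hzN
  refine hx ⟨z.1 1, fun hnot => ?_, ?_⟩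
  · exact hnot _ (hC.shiftHatInv_mem_NC hz) hzN
  · simpa using (z.2 0).trans hz.1

end PathMeasure

section LpIndicator

variable {Ω E : Type*} [MeasurableSpace Ω] {μ : Measure Ω} [NormedAddCommGroup E]

theorem enorm_sq_eq_lintegral (ξ : Lp E 2 μ) : ‖ξ‖ₑ ^ 2 = ∫⁻ z, ‖ξ z‖ₑ ^ 2 ∂μ := by
  rw [Lp.enorm_def]
  simpa only [ENNReal.coe_ofNat, NNReal.coe_ofNat, ENNReal.rpow_ofNat] using
    eLpNorm_nnreal_pow_eq_lintegral (f := ξ) (μ := μ) (p := 2) two_ne_zero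

variable {q : ℝ≥0∞} {S T : Set Ω}

/-- Restriction of an `Lᵖ` function to a measurable set, extended by zero: the projection of `Lᵖ`
onto the functions supported in `S`. -/
def indicatorLp (hS : MeasurableSet S) (ξ : Lp E q μ) : Lp E q μ :=
  ((Lp.memLp ξ).indicator hS).toLp

theorem coeFn_indicatorLp (hS : MeasurableSet S) (ξ : Lp E q μ) :
    ⇑(indicatorLp hS ξ) =ᵐ[μ] S.indicator ξ :=
  MemLp.coeFn_toLp _

theorem norm_indicatorLp_le (hS : MeasurableSet S) (ξ : Lp E q μ) : ‖indicatorLp hS ξ‖ ≤ ‖ξ‖ := by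
  refine Lp.norm_le_norm_of_ae_le ?_
  filter_upwards [coeFn_indicatorLp hS ξ] with z hz
  rw [hz]
  exact norm_indicator_le_norm_self _ _

theorem indicatorLp_indicatorLp (hS : MeasurableSet S) (hT : MeasurableSet T) (ξ : Lp E q μ) :
    indicatorLp hT (indicatorLp hS ξ) = indicatorLp (hT.inter hS) ξ := by
  refine Lp.ext ?_
  filter_upwards [coeFn_indicatorLp hS ξ, coeFn_indicatorLp hT (indicatorLp hS ξ),
    coeFn_indicatorLp (hT.inter hS) ξ] with z hzS hzT hzST
  rw [hzT, hzST, ← Set.indicator_indicator]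
  by_cases hz : z ∈ T <;> simp [hz, hzS]

theorem tendsto_indicatorLp [Fact (1 ≤ q)] (hq : q ≠ ∞) {S : ℕ → Set Ω}
    (hS : ∀ n, MeasurableSet (S n)) (ξ : Lp E q μ) (h : ∀ᵐ z ∂μ, ∀ᶠ n in atTop, z ∈ S n) :
    Tendsto (fun n => indicatorLp (hS n) ξ) atTop (𝓝 ξ) := by
  have hq0 : q ≠ 0 := (zero_lt_one.trans_le Fact.out).ne'
  have hqpos : 0 < q.toReal := ENNReal.toReal_pos hq0 hq
  have hae (n : ℕ) : ⇑(indicatorLp (hS n) ξ) - ⇑ξ =ᵐ[μ] -(S n)ᶜ.indicator ξ := by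
    filter_upwards [coeFn_indicatorLp (hS n) ξ] with z hz
    rw [Pi.sub_apply, hz, Pi.neg_apply]
    by_cases hzS : z ∈ S n <;> simp [hzS]
  have hint : Tendsto (fun n => ∫⁻ z, ‖(S n)ᶜ.indicator ξ z‖ₑ ^ q.toReal ∂μ) atTop (𝓝 0) := by
    rw [← lintegral_zero (μ := μ)]
    refine tendsto_lintegral_of_dominated_convergence' (fun z => ‖ξ z‖ₑ ^ q.toReal)
      (fun n => ?_) (fun n => .of_forall fun z => ?_) ?_ ?_
    · exact ((Lp.aestronglyMeasurable ξ).indicator (hS n).compl).enorm.pow_const _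
    · exact ENNReal.rpow_le_rpow (enorm_indicator_le_enorm_self _ _) hqpos.le
    · exact (lintegral_rpow_enorm_lt_top_of_eLpNorm_lt_top hq0 hq (Lp.eLpNorm_lt_top ξ)).ne
    · filter_upwards [h] with z hz
      refine tendsto_const_nhds.congr' (hz.mono fun n hn => ?_)
      simp [hn, hqpos]
  rw [Lp.tendsto_Lp_iff_tendsto_eLpNorm']
  simp only [eLpNorm_congr_ae (hae _), eLpNorm_neg]
  simp only [eLpNorm_eq_lintegral_rpow_enorm_toReal hq0 hq]
  have hrpow := hint.ennrpow_const (1 / q.toReal)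
  rwa [ENNReal.zero_rpow_of_pos (by positivity)] at hrpow

theorem tendsto_indicatorLp_norm_le [Fact (1 ≤ q)] (hq : q ≠ ∞) {ψ : Ω → E}
    (hψ : ∀ K : ℕ, MeasurableSet {z | ‖ψ z‖ ≤ K}) (ξ : Lp E q μ) :
    Tendsto (fun K => indicatorLp (hψ K) ξ) atTop (𝓝 ξ) :=
  tendsto_indicatorLp hq hψ ξ <| .of_forall fun z =>
    (eventually_ge_atTop ⌈‖ψ z‖⌉₊).mono fun _ hK => (Nat.le_ceil _).trans (Nat.cast_le.2 hK)

theorem inner_indicatorLp_right {𝕜 F : Type*} [RCLike 𝕜] [NormedAddCommGroup F]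
    [InnerProductSpace 𝕜 F] (hS : MeasurableSet S) (ψ ξ : Lp F 2 μ) :
    inner 𝕜 (indicatorLp hS ψ) (indicatorLp hS ξ) = inner 𝕜 (indicatorLp hS ψ) ξ := by
  rw [L2.inner_def, L2.inner_def]
  refine integral_congr_ae ?_
  filter_upwards [coeFn_indicatorLp hS ψ, coeFn_indicatorLp hS ξ] with z hψ hξ
  rw [hψ, hξ]
  by_cases hz : z ∈ S <;> simp [hz]

end LpIndicator

-- If `b` is the component of `h` seen by `a`, then `⟪a, h⟫ = ⟪a, b⟫ ≈ ‖a‖²`, and since `h` is no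
-- longer than `a` there is no room left for a component of `h` orthogonal to `a`.
theorem norm_sub_le_of_inner_eq {𝕜 H : Type*} [RCLike 𝕜] [NormedAddCommGroup H]
    [InnerProductSpace 𝕜 H] {a b h : H} {t : ℝ} (ht : 0 ≤ t) (hab : inner 𝕜 a b = inner 𝕜 a h)
    (hle : ‖h‖ ≤ ‖a‖) (hclose : ‖a - b‖ ≤ t ^ 2 / 2 * ‖a‖) : ‖a - h‖ ≤ t * ‖a‖ := by
  have hre : RCLike.re (inner 𝕜 a (a - b)) ≤ ‖a‖ * (t ^ 2 / 2 * ‖a‖) :=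
    (re_inner_le_norm _ _).trans (by gcongr)
  rw [inner_sub_right, map_sub, inner_self_eq_norm_sq, hab] at hre
  have hsq : ‖h‖ ^ 2 ≤ ‖a‖ ^ 2 := by gcongr
  refine le_of_sq_le_sq ?_ (by positivity)
  rw [norm_sub_sq (𝕜 := 𝕜)]
  linarith

theorem exists_measurable_extension_of_injOn {Ω X E : Type*} [MeasurableSpace Ω]
    [StandardBorelSpace Ω] [MeasurableSpace X] [MeasurableSpace.CountablySeparated X]
    [NormedAddCommGroup E] [MeasurableSpace E] {c : Ω → X} (hc : Measurable c) {B : Set Ω}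
    (hB : MeasurableSet B) (hinj : B.InjOn c) {u : Ω → E} (hu : Measurable u) {K : ℝ}
    (hK : ∀ z ∈ B, ‖u z‖ ≤ K) :
    ∃ g : X → E, Measurable g ∧ (∃ M : ℝ, ∀ x, ‖g x‖ ≤ M) ∧ (∀ z ∈ B, g (c z) = u z) ∧
      ∀ x ∉ c '' B, g x = 0 := by
  have := hB.standardBorel
  have hemb : MeasurableEmbedding (B.domRestrict c) :=
    (hc.comp measurable_subtype_coe).measurableEmbedding (Set.injOn_iff_injective.1 hinj)
  set g : X → E := Function.extend (B.domRestrict c) (B.domRestrict u) 0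
  have hgB : ∀ z ∈ B, g (c z) = u z := fun z hz => hemb.injective.extend_apply _ _ ⟨z, hz⟩
  have hg0 : ∀ x ∉ c '' B, g x = 0 := fun x hx => by
    refine Function.extend_apply' _ _ _ ?_
    rintro ⟨z, rfl⟩
    exact hx ⟨z, z.2, rfl⟩
  refine ⟨g, hemb.measurable_extend (hu.comp measurable_subtype_coe) measurable_zero,
    ⟨max K 0, fun x => ?_⟩, hgB, hg0⟩
  by_cases hx : x ∈ c '' B
  · obtain ⟨z, hz, rfl⟩ := hx
    exact (hgB z hz).symm ▸ (hK z hz).trans (le_max_left _ _)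
  · rw [hg0 x hx, norm_zero]
    exact le_max_right _ _

section Operators

variable {X : Type*} {r : X → X} [MeasurableSpace X] {lamC : Measure (Solenoid r)} {p : ℕ}
  {α : ZMod p → ℂ} {ι : Solenoid r → ZMod p}

/-- The operator `U` is the dilation `U ξ = α_{i(ω)} √𝔠 (ξ ∘ r̂)` of `L²(lamC)`, where the value
of the limit index `i(ω)` is read off by `ι`. -/
def IsDilation (r : X → X) {lamC : Measure (Solenoid r)} (α : ZMod p → ℂ) (ι : Solenoid r → ZMod p)
    (U : Lp ℂ 2 lamC → Lp ℂ 2 lamC) : Prop :=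
  ∀ ξ, ⇑(U ξ) =ᵐ[lamC]
    fun z => α (ι z) * (Real.sqrt (Nat.card (r ⁻¹' {r (z.1 0)})) : ℂ) * ξ (shiftHat r z)

/-- The operators `π f` act on `L²(lamC)` as multiplication by `f (z 0)` whenever `f` is bounded
and measurable; nothing is required of `π f` for other `f`. -/
def IsMultiplication (π : (X → ℂ) → Lp ℂ 2 lamC → Lp ℂ 2 lamC) : Prop :=
  ∀ f : X → ℂ, Measurable f → (∃ M : ℝ, ∀ x, ‖f x‖ ≤ M) →
    ∀ ξ, ⇑(π f ξ) =ᵐ[lamC] fun z => f (z.1 0) * ξ z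

theorem IsMultiplication.norm_indicatorLp_sub_le (hπ : IsMultiplication π) {B : Set (Solenoid r)}
    (hB : MeasurableSet B) {φ ψ : Lp ℂ 2 lamC} {ε : ℝ} (hφ : ∀ z ∈ B, ‖φ z - 1‖ ≤ ε) {g : X → ℂ}
    (hg : Measurable g) (hgb : ∃ M : ℝ, ∀ x, ‖g x‖ ≤ M)
    (hgB : ∀ z ∈ B, g (z.1 0) = ψ z) :
    ‖indicatorLp hB ψ - indicatorLp hB (π g φ)‖ ≤ ε * ‖indicatorLp hB ψ‖ := by
  refine Lp.norm_le_mul_norm_of_ae_le_mul ?_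
  filter_upwards [coeFn_indicatorLp hB ψ, coeFn_indicatorLp hB (π g φ), hπ g hg hgb φ,
    Lp.coeFn_sub (indicatorLp hB ψ) (indicatorLp hB (π g φ))] with z hψz hindz hπz hsub
  rw [hsub, Pi.sub_apply, hψz, hindz]
  by_cases hz : z ∈ B
  · rw [Set.indicator_of_mem hz, Set.indicator_of_mem hz, hπz, hgB z hz, norm_sub_rev,
      ← mul_sub_one, norm_mul, mul_comm]
    exact mul_le_mul_of_nonneg_right (hφ z hz) (norm_nonneg _)
  · simp [hz]

/-- The orbit of `φ` under multiplication by bounded measurable functions; its closure is the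
resolution space `V₀`. -/
def multiplicationOrbit (π : (X → ℂ) → Lp ℂ 2 lamC → Lp ℂ 2 lamC) (φ : Lp ℂ 2 lamC) :
    Set (Lp ℂ 2 lamC) :=
  {ξ | ∃ f : X → ℂ, Measurable f ∧ (∃ M : ℝ, ∀ x, ‖f x‖ ≤ M) ∧ ξ = π f φ}

theorem IsDilation.map_indicatorLp {U : Lp ℂ 2 lamC → Lp ℂ 2 lamC} (hU : IsDilation r α ι U)
    (hshift : Measure.QuasiMeasurePreserving (shiftHat r) lamC lamC) {S : Set (Solenoid r)}
    (hS : MeasurableSet S) (ξ : Lp ℂ 2 lamC) :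
    U (indicatorLp (measurable_shiftHatInv hS) ξ) = indicatorLp hS (U ξ) := by
  refine Lp.ext ?_
  filter_upwards [hU (indicatorLp (measurable_shiftHatInv hS) ξ), hU ξ,
    coeFn_indicatorLp hS (U ξ), hshift.ae (coeFn_indicatorLp (measurable_shiftHatInv hS) ξ)]
    with z hUind hUξ hind hshiftInd
  have hmem : shiftHat r z ∈ shiftHatInv r ⁻¹' S ↔ z ∈ S := by
    rw [Set.mem_preimage, leftInverse_shiftHatInv z]
  rw [hUind, hind, hshiftInd]
  by_cases hz : z ∈ S
  · rw [Set.indicator_of_mem (hmem.2 hz), Set.indicator_of_mem hz, hUξ]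
  · rw [Set.indicator_of_notMem (mt hmem.1 hz), Set.indicator_of_notMem hz, mul_zero]

theorem IsDilation.pow_map_indicatorLp {U : Lp ℂ 2 lamC ≃ₗᵢ[ℂ] Lp ℂ 2 lamC}
    (hU : IsDilation r α ι U)
    (hshift : Measure.QuasiMeasurePreserving (shiftHat r) lamC lamC) {S : Set (Solenoid r)}
    (hS : MeasurableSet S) (n : ℕ) (ξ : Lp ℂ 2 lamC) :
    (U ^ n) (indicatorLp (measurable_shiftHatInv.iterate n hS) ξ) =
      indicatorLp hS ((U ^ n) ξ) := by
  induction n generalizing ξ with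
  | zero => rfl
  | succ n ih =>
    rw [pow_succ, LinearIsometryEquiv.coe_mul, Function.comp_apply, Function.comp_apply, ← ih]
    exact congrArg _ (hU.map_indicatorLp hshift (measurable_shiftHatInv.iterate n hS) ξ)

end Operators

section Refinement

variable {X : Type*} [MetricSpace X] [MeasurableSpace X] {r : X → X} {p : ℕ}
  [NeZero p] {xc : ZMod p → X} {α : ZMod p → ℂ} {ι : Solenoid r → ZMod p} {m0 : X → ℂ} {β : ℝ → ℝ}
  {lamC : Measure (Solenoid r)} {π : (X → ℂ) → Lp ℂ 2 lamC → Lp ℂ 2 lamC} {φ : Lp ℂ 2 lamC}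

-- The refinement equation `U (π f φ) = π ((f ∘ r) m₀) φ`.
theorem IsDilation.mapsTo_multiplicationOrbit {U : Lp ℂ 2 lamC → Lp ℂ 2 lamC}
    (hU : IsDilation r α ι U) (hπ : IsMultiplication π)
    (hshift : Measure.QuasiMeasurePreserving (shiftHat r) lamC lamC)
    (hfollow : ∀ᵐ z ∂lamC, ∃ i, FollowsCycle xc z i) (hr : Measurable r)
    (hC : IsRepellingCycle r xc) (hι : IsLimitIndex r xc ι) (hm : IsLowPassFilter r xc α m0 β)
    (hm0 : Measurable m0) (hm0b : ∃ M : ℝ, ∀ x, ‖m0 x‖ ≤ M)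
    (hφ : ⇑φ =ᵐ[lamC] scalingFn r α ι m0) :
    Set.MapsTo U (multiplicationOrbit π φ) (multiplicationOrbit π φ) := by
  rintro _ ⟨f, hf, ⟨Mf, hMf⟩, rfl⟩
  obtain ⟨M0, hM0⟩ := hm0b
  have hmeas : Measurable fun x => f (r x) * m0 x := (hf.comp hr).mul hm0
  have hbound : ∃ M : ℝ, ∀ x, ‖f (r x) * m0 x‖ ≤ M := ⟨Mf * M0, fun x => by
    rw [norm_mul]
    exact mul_le_mul (hMf _) (hM0 _) (norm_nonneg _) ((norm_nonneg _).trans (hMf x))⟩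
  refine ⟨_, hmeas, hbound, Lp.ext ?_⟩
  filter_upwards [hU (π f φ), hπ _ hmeas hbound φ, hshift.ae (hπ f hf ⟨Mf, hMf⟩ φ),
    hshift.ae hφ, hφ, hfollow] with z hUz hπz hπshift hφshift hφz hz
  obtain ⟨i, hi⟩ := hz
  rw [hUz, hπz, hπshift, hφshift, hφz, shiftHat_apply_zero]
  linear_combination f (r (z.1 0)) * hm.scalingFn_shiftHat hC hι hi

end Refinement

section Density

variable {X : Type*} [MetricSpace X] [MeasurableSpace X] {r : X → X} {p : ℕ} [NeZero p]
  {xc : ZMod p → X} {ρ : Measure X} {lamC : Measure (Solenoid r)}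
  {π : (X → ℂ) → Lp ℂ 2 lamC → Lp ℂ 2 lamC} {φ ψ : Lp ℂ 2 lamC} {B : Set (Solenoid r)} {g : X → ℂ}

theorem IsPathMeasure.lintegral_le_of_image (hlam : IsPathMeasure r xc ρ lamC)
    (hC : IsRepellingCycle r xc) {F : Solenoid r → ℝ≥0∞} (hF : Measurable F) {G : X → ℝ≥0∞}
    (hB : ∀ z ∈ B, ∃ i, FollowsCycle xc z i) (hGF : ∀ z ∈ B, G (z.1 0) ≤ F z)
    (hG : ∀ x ∉ (fun z : Solenoid r => z.1 0) '' B, G x = 0) :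
    ∫⁻ x, G x ∂ρ ≤ ∫⁻ z, F z ∂lamC := by
  rw [hlam F hF]
  refine lintegral_mono fun x => ?_
  by_cases hx : x ∈ (fun z : Solenoid r => z.1 0) '' B
  · obtain ⟨z, hz, rfl⟩ := hx
    exact (hGF z hz).trans
      (ENNReal.le_tsum (⟨z, hC.mem_NC_iff.2 ⟨rfl, hB z hz⟩⟩ : NC r xc (z.1 0)))
  · rw [hG x hx]
    exact bot_le

variable {α : ZMod p → ℂ} {ι : Solenoid r → ZMod p} {m0 : X → ℂ} {β : ℝ → ℝ}

theorem IsMultiplication.enorm_sq_le_lintegral (hπ : IsMultiplication π)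
    (hlam : IsPathMeasure r xc ρ lamC) (hC : IsRepellingCycle r xc)
    (hm : IsLowPassFilter r xc α m0 β) (hι : IsLimitIndex r xc ι)
    (hφ : ∀ᵐ x ∂ρ, ∀ z ∈ NC r xc x, φ z = scalingFn r α ι m0 z) (hg : Measurable g)
    (hgb : ∃ M : ℝ, ∀ x, ‖g x‖ ≤ M) : ‖π g φ‖ₑ ^ 2 ≤ ∫⁻ x, ‖g x‖ₑ ^ 2 ∂ρ := by
  have hint : ∫⁻ z, ‖π g φ z‖ₑ ^ 2 ∂lamC = ∫⁻ z, ‖g (z.1 0)‖ₑ ^ 2 * ‖φ z‖ₑ ^ 2 ∂lamC :=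
    lintegral_congr_ae <| (hπ g hg hgb φ).mono fun z hz => by
      simp only [hz, enorm_mul, mul_pow]
  have hmeas : Measurable fun z : Solenoid r => ‖g (z.1 0)‖ₑ ^ 2 * ‖φ z‖ₑ ^ 2 :=
    ((hg.comp (Solenoid.measurable_apply 0)).enorm.pow_const 2).mul
      ((Lp.stronglyMeasurable φ).measurable.enorm.pow_const 2)
  rw [enorm_sq_eq_lintegral, hint, hlam _ hmeas]
  refine lintegral_mono_ae ?_
  filter_upwards [hφ] with x hx
  calc ∑' ω : NC r xc x, ‖g (ω.1.1 0)‖ₑ ^ 2 * ‖φ ω.1‖ₑ ^ 2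
      = ‖g x‖ₑ ^ 2 * ∑' ω : NC r xc x, ‖scalingFn r α ι m0 ω.1‖ₑ ^ 2 := by
        rw [← ENNReal.tsum_mul_left]
        exact tsum_congr fun ω => by rw [ω.2.1, hx ω.1 ω.2]
    _ ≤ ‖g x‖ₑ ^ 2 := mul_le_of_le_one_right bot_le (hm.tsum_enorm_sq_scalingFn_le_one hC hι x)

theorem IsLowPassFilter.ae_eventually_mem_shadowingPaths (hm : IsLowPassFilter r xc α m0 β)
    (hC : IsRepellingCycle r xc) (hι : IsLimitIndex r xc ι)
    (hshift : Measure.QuasiMeasurePreserving (shiftHatInv r) lamC lamC)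
    (hfollow : ∀ᵐ z ∂lamC, ∃ i, FollowsCycle xc z i)
    (hφ : ⇑φ =ᵐ[lamC] scalingFn r α ι m0) {η ε : ℝ} (hη : 0 < η) (hε : 0 < ε) :
    ∀ᵐ z ∂lamC, ∀ᶠ n in atTop,
      (shiftHatInv r)^[n] z ∈ shadowingPaths r xc η ∩ {z | ‖φ z - 1‖ ≤ ε} := by
  have hφn : ∀ᵐ z ∂lamC, ∀ n : ℕ,
      φ ((shiftHatInv r)^[n] z) = scalingFn r α ι m0 ((shiftHatInv r)^[n] z) :=
    ae_all_iff.2 fun n => (hshift.iterate n).ae hφ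
  filter_upwards [hφn, hfollow] with z hφz ⟨i, hi⟩
  filter_upwards [hi.eventually_mem_shadowingPaths hη,
    Metric.tendsto_nhds.1 (hm.tendsto_scalingFn_shiftHatInv_iterate hC hι hi) ε hε] with n hn hclose
  refine ⟨hn, ?_⟩
  rw [Set.mem_ofPred_eq, hφz n, ← dist_eq_norm]
  exact hclose.le

variable [StandardBorelSpace X]

theorem exists_mem_multiplicationOrbit_norm_sub_le (hlam : IsPathMeasure r xc ρ lamC)
    (hr : Measurable r) (hC : IsRepellingCycle r xc) (hm : IsLowPassFilter r xc α m0 β)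
    (hι : IsLimitIndex r xc ι) (hπ : IsMultiplication π)
    (hφ : ∀ᵐ x ∂ρ, ∀ z ∈ NC r xc x, φ z = scalingFn r α ι m0 z) (hB : MeasurableSet B)
    (hinj : B.InjOn fun z => z.1 0) (hfollow : ∀ z ∈ B, ∃ i, FollowsCycle xc z i) {t : ℝ}
    (ht : 0 ≤ t) (hφB : ∀ z ∈ B, ‖φ z - 1‖ ≤ t ^ 2 / 2) {K : ℝ} (hψ : ∀ z ∈ B, ‖ψ z‖ ≤ K) :
    ∃ ζ ∈ multiplicationOrbit π φ, ‖indicatorLp hB ψ - ζ‖ ≤ t * ‖indicatorLp hB ψ‖ := by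
  have := Solenoid.standardBorelSpace hr
  have hψm : Measurable ψ := (Lp.stronglyMeasurable ψ).measurable
  obtain ⟨g, hg, hgb, hgB, hg0⟩ :=
    exists_measurable_extension_of_injOn (Solenoid.measurable_apply 0) hB hinj hψm hψ
  refine ⟨π g φ, ⟨g, hg, hgb, rfl⟩, norm_sub_le_of_inner_eq ht
    (inner_indicatorLp_right (𝕜 := ℂ) hB ψ (π g φ)) ?_
    (hπ.norm_indicatorLp_sub_le hB hφB hg hgb hgB)⟩
  have hint : ∫⁻ z, ‖indicatorLp hB ψ z‖ₑ ^ 2 ∂lamC = ∫⁻ z, ‖B.indicator ψ z‖ₑ ^ 2 ∂lamC :=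
    lintegral_congr_ae <| (coeFn_indicatorLp hB ψ).mono fun z hz => by simp only [hz]
  have hsq : ‖π g φ‖ₑ ^ 2 ≤ ‖indicatorLp hB ψ‖ₑ ^ 2 := by
    refine (hπ.enorm_sq_le_lintegral hlam hC hm hι hφ hg hgb).trans ?_
    rw [enorm_sq_eq_lintegral, hint]
    refine hlam.lintegral_le_of_image hC ((hψm.indicator hB).enorm.pow_const 2) hfollow
      (fun z hz => ?_) fun x hx => ?_
    · rw [hgB z hz, Set.indicator_of_mem hz]
    · simp [hg0 x hx]
  exact enorm_le_iff_norm_le.1 ((ENNReal.pow_le_pow_left_iff two_ne_zero).1 hsq)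

theorem exists_mem_multiplicationOrbit_norm_sub_lt (hlam : IsPathMeasure r xc ρ lamC)
    (hr : Measurable r) (hC : IsRepellingCycle r xc) (hm : IsLowPassFilter r xc α m0 β)
    (hι : IsLimitIndex r xc ι) (hπ : IsMultiplication π)
    (hφ : ∀ᵐ x ∂ρ, ∀ z ∈ NC r xc x, φ z = scalingFn r α ι m0 z) (hB : MeasurableSet B)
    (hinj : B.InjOn fun z => z.1 0) (hfollow : ∀ z ∈ B, ∃ i, FollowsCycle xc z i) {t : ℝ}
    (ht : 0 ≤ t) (hφB : ∀ z ∈ B, ‖φ z - 1‖ ≤ t ^ 2 / 2) {δ : ℝ} (hδ : t * ‖ψ‖ < δ) :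
    ∃ ζ ∈ multiplicationOrbit π φ, ‖indicatorLp hB ψ - ζ‖ < δ := by
  have hψK : ∀ K : ℕ, MeasurableSet {z | ‖ψ z‖ ≤ K} := fun K =>
    measurableSet_le (Lp.stronglyMeasurable ψ).measurable.norm measurable_const
  obtain ⟨K, hK⟩ := (Metric.tendsto_nhds.1
    (tendsto_indicatorLp_norm_le ENNReal.ofNat_ne_top hψK (indicatorLp hB ψ)) (δ - t * ‖ψ‖)
    (sub_pos.2 hδ)).exists
  rw [indicatorLp_indicatorLp, dist_eq_norm, norm_sub_rev] at hK
  have hBK := (hψK K).inter hB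
  obtain ⟨ζ, hζ, hdist⟩ := exists_mem_multiplicationOrbit_norm_sub_le hlam hr hC hm hι hπ hφ
    hBK (hinj.mono Set.inter_subset_right) (fun z hz => hfollow z hz.2) ht
    (fun z hz => hφB z hz.2) (ψ := ψ) (fun z hz => hz.1)
  refine ⟨ζ, hζ, ?_⟩
  have hnorm : t * ‖indicatorLp hBK ψ‖ ≤ t * ‖ψ‖ := by
    gcongr
    exact norm_indicatorLp_le hBK ψ
  linarith [norm_sub_le_norm_sub_add_norm_sub (indicatorLp hB ψ) (indicatorLp hBK ψ) ζ]

theorem IsDilation.exists_pow_dist_lt [BorelSpace X] [IsFiniteMeasure ρ]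
    {U : Lp ℂ 2 lamC ≃ₗᵢ[ℂ] Lp ℂ 2 lamC} (hU : IsDilation r α ι U) (hπ : IsMultiplication π)
    (hlam : IsPathMeasure r xc ρ lamC) (hρ : StronglyInvariant r ρ) (hr : Measurable r)
    (hC : IsRepellingCycle r xc) (hm : IsLowPassFilter r xc α m0 β) (hι : IsLimitIndex r xc ι)
    (hφ : ⇑φ =ᵐ[lamC] scalingFn r α ι m0) (ξ : Lp ℂ 2 lamC) {e : ℝ} (he : 0 < e) :
    ∃ n : ℕ, ∃ ζ ∈ multiplicationOrbit π φ, dist ((U ^ n) ξ) ζ < e := by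
  obtain ⟨η, hη, hinj⟩ := hm.exists_injOn_shadowingPaths hC
  set t : ℝ := e / 2 / (‖ξ‖ + 1) with htdef
  have ht : 0 < t := by positivity
  have hB : MeasurableSet (shadowingPaths r xc η ∩ {z | ‖φ z - 1‖ ≤ t ^ 2 / 2}) :=
    (measurableSet_shadowingPaths η).inter
      (measurableSet_le ((Lp.stronglyMeasurable φ).measurable.sub_const 1).norm measurable_const)
  have hmem := hm.ae_eventually_mem_shadowingPaths hC hι
    (hlam.quasiMeasurePreserving_shiftHatInv hρ hr hC hm) (hlam.ae_exists_followsCycle hC) hφ hη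
    (by positivity : 0 < t ^ 2 / 2)
  obtain ⟨n, hn⟩ := (Metric.tendsto_nhds.1 (tendsto_indicatorLp ENNReal.ofNat_ne_top
    (fun n => measurable_shiftHatInv.iterate n hB) ξ hmem) (e / 2) (by positivity)).exists
  have htξ : t * ‖(U ^ n) ξ‖ < e / 2 := by
    rw [LinearIsometryEquiv.norm_map, htdef, div_mul_eq_mul_div, div_lt_iff₀ (by positivity)]
    linarith
  obtain ⟨ζ, hζ, hlt⟩ := exists_mem_multiplicationOrbit_norm_sub_lt hlam hr hC hm hι hπ
    (hlam.ae_forall_mem_NC hρ hr hC hm hφ) hB (hinj.mono Set.inter_subset_left)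
    (fun z hz => by obtain ⟨i, hi⟩ := hz.1; exact ⟨i, hi.1⟩) ht.le (fun z hz => hz.2) htξ
  refine ⟨n, ζ, hζ, ?_⟩
  have hdist : dist ((U ^ n) ξ) (indicatorLp hB ((U ^ n) ξ)) < e / 2 := by
    rwa [← hU.pow_map_indicatorLp (hlam.quasiMeasurePreserving_shiftHat hρ hr hC hm) hB,
      LinearIsometryEquiv.dist_map, dist_comm]
  rw [← dist_eq_norm] at hlt
  linarith [dist_triangle ((U ^ n) ξ) (indicatorLp hB ((U ^ n) ξ)) ζ]

end Density

theorem eq_zpow_of_map_add_one {G : Type*} [Group G] {u : G} {f : ℤ → G} (h0 : f 0 = 1)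
    (hadd : ∀ k, f (k + 1) = u * f k) (k : ℤ) : f k = u ^ k := by
  induction k using Int.induction_on with
  | zero => rw [h0, zpow_zero]
  | succ k ih => rw [hadd, ih, add_comm, zpow_one_add]
  | pred k ih =>
    rw [← sub_add_cancel (-k : ℤ) 1, hadd, add_comm, zpow_one_add] at ih
    exact mul_left_cancel ih

section Multiresolution

variable {𝕜 H : Type*} [NormedField 𝕜] [SeminormedAddCommGroup H] [NormedSpace 𝕜 H]
  {U : H ≃ₗᵢ[𝕜] H} {V : Set H}

theorem zpow_neg_image_subset_succ (h : Set.MapsTo U V V) (n : ℤ) :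
    ⇑(U ^ (-n)) '' V ⊆ ⇑(U ^ (-(n + 1))) '' V := by
  rintro _ ⟨ξ, hξ, rfl⟩
  refine ⟨U ξ, h hξ, ?_⟩
  rw [← Function.comp_apply (f := ⇑(U ^ (-(n + 1)))), ← LinearIsometryEquiv.coe_mul,
    ← zpow_add_one, neg_add, neg_add_cancel_right]

theorem closure_iUnion_zpow_neg_image_eq_univ
    (h : ∀ ξ, ∀ e > 0, ∃ n : ℕ, ∃ ζ ∈ V, dist ((U ^ n) ξ) ζ < e) :
    closure (⋃ n : ℤ, ⇑(U ^ (-n)) '' V) = Set.univ := by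
  refine Set.eq_univ_iff_forall.2 fun ξ => Metric.mem_closure_iff.2 fun e he => ?_
  obtain ⟨n, ζ, hζ, hdist⟩ := h ξ e he
  refine ⟨(U ^ (-n : ℤ)) ζ, Set.mem_iUnion.2 ⟨n, ζ, hζ, rfl⟩, ?_⟩
  rwa [← (U ^ n).dist_map, zpow_neg, zpow_natCast, ← Function.comp_apply (f := ⇑(U ^ n)),
    ← LinearIsometryEquiv.coe_mul, mul_inv_cancel]

end Multiresolution

theorem statement11_general {X : Type*} [MetricSpace X] [MeasurableSpace X] [BorelSpace X]
    [StandardBorelSpace X] {r : X → X} (hr : Measurable r) {ρ : Measure X} [IsFiniteMeasure ρ]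
    (hρ : StronglyInvariant r ρ) {p : ℕ} [NeZero p] {xc : ZMod p → X} (hC : IsRepellingCycle r xc)
    {lamC : Measure (Solenoid r)} (hlam : IsPathMeasure r xc ρ lamC) {α : ZMod p → ℂ}
    {ι : Solenoid r → ZMod p} (hι : IsLimitIndex r xc ι) {m0 : X → ℂ} (hm0 : Measurable m0)
    (hm0b : ∃ M : ℝ, ∀ x, ‖m0 x‖ ≤ M) {β : ℝ → ℝ} (hm : IsLowPassFilter r xc α m0 β)
    {U : Lp ℂ 2 lamC ≃ₗᵢ[ℂ] Lp ℂ 2 lamC} (hU : IsDilation r α ι U)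
    {π : (X → ℂ) → Lp ℂ 2 lamC → Lp ℂ 2 lamC} (hπ : IsMultiplication π) {φ : Lp ℂ 2 lamC}
    (hφ : ⇑φ =ᵐ[lamC] scalingFn r α ι m0) :
    (∀ n : ℤ, ⇑(U ^ (-n)) '' closure (multiplicationOrbit π φ) ⊆
      ⇑(U ^ (-(n + 1))) '' closure (multiplicationOrbit π φ)) ∧
    closure (⋃ n : ℤ, ⇑(U ^ (-n)) '' closure (multiplicationOrbit π φ)) = Set.univ := by
  constructor
  · have hmaps := hU.mapsTo_multiplicationOrbit hπ
      (hlam.quasiMeasurePreserving_shiftHat hρ hr hC hm) (hlam.ae_exists_followsCycle hC) hr hC hι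
      hm hm0 hm0b hφ
    exact zpow_neg_image_subset_succ (hmaps.closure U.continuous)
  · refine closure_iUnion_zpow_neg_image_eq_univ fun ξ e he => ?_
    obtain ⟨n, ζ, hζ, hdist⟩ := hU.exists_pow_dist_lt hπ hlam hρ hr hC hm hι hφ ξ he
    exact ⟨n, ζ, subset_closure hζ, hdist⟩

theorem statement11
    {X : Type*} [MetricSpace X] [CompactSpace X] [MeasurableSpace X] [BorelSpace X]
    (r : X → X) (hr : Measurable r)
    (hfin : ∀ x : X, (r ⁻¹' {x}).Finite) (hne : ∀ x : X, (r ⁻¹' {x}).Nonempty)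
    (ρ : Measure X) [IsProbabilityMeasure ρ]
    (hsi : ∀ f : X → ℝ, Measurable f → (∃ M : ℝ, ∀ x, |f x| ≤ M) →
      ∫ x, f x ∂ρ = ∫ x, (Nat.card (r ⁻¹' {x}) : ℝ)⁻¹ * ∑' y : r ⁻¹' {x}, f y.1 ∂ρ)
    {p : ℕ} (hp : 0 < p) (xc : ZMod p → X) (hxc : Function.Injective xc)
    (hcyc : ∀ i : ZMod p, r (xc (i + 1)) = xc i)
    (lamC : Measure (Solenoid r))
    (hlam : ∀ F : Solenoid r → ℝ≥0∞, Measurable F →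
      ∫⁻ z, F z ∂lamC = ∫⁻ x, ∑' ω : NC r xc x, F ω.1 ∂ρ)
    (α : ZMod p → ℂ) (hα : ∀ i, ‖α i‖ = 1)
    (ι : Solenoid r → ZMod p)
    (hι : ∀ x : X, ∀ ω ∈ NC r xc x,
      Tendsto (fun n : ℕ => ω.1 ((p : ℤ) * (n : ℤ))) atTop (𝓝 (xc (ι ω))))
    (hrep : ∀ i : ZMod p, ∃ c δ : ℝ, 0 < c ∧ c < 1 ∧ 0 < δ ∧ ∀ x : X,
      0 < dist x (xc i) → dist x (xc i) < δ → c⁻¹ * dist x (xc i) < dist (r^[p] x) (xc i))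
    (hrc : ∀ i : ZMod p, ContinuousAt r (xc i))
    (hcc : ∀ i : ZMod p, ∀ᶠ y in 𝓝 (xc i), Nat.card (r ⁻¹' {y}) = Nat.card (r ⁻¹' {xc i}))
    (m0 : X → ℂ) (hm0m : Measurable m0) (hm0b : ∃ M : ℝ, ∀ x, ‖m0 x‖ ≤ M)
    (β : ℝ → ℝ) (hβmono : MonotoneOn β (Set.Ici 0)) (hβ0 : ∀ t : ℝ, 0 ≤ t → 0 ≤ β t)
    (hβsum : ∀ A : ℝ, 0 < A → ∀ c : ℝ, 0 < c → c < 1 →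
      Summable fun k : ℕ => β (A * c ^ (k + 1)))
    (hβlip : ∀ i : ZMod p, ∀ᶠ y in 𝓝 (xc i), ‖m0 y - m0 (xc i)‖ ≤ β (dist y (xc i)))
    (hqmf : ∀ x : X,
      (Nat.card (r ⁻¹' {x}) : ℝ)⁻¹ * ∑' y : r ⁻¹' {x}, ‖m0 y.1‖ ^ 2 = 1)
    (hlp : ∀ i : ZMod p, m0 (xc i) = α i * (Real.sqrt (Nat.card (r ⁻¹' {r (xc i)})) : ℂ))
    (U : Lp ℂ 2 lamC ≃ₗᵢ[ℂ] Lp ℂ 2 lamC)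
    (hU : ∀ ξ : Lp ℂ 2 lamC, ⇑(U ξ) =ᵐ[lamC]
      fun z => α (ι z) * (Real.sqrt (Nat.card (r ⁻¹' {r (z.1 0)})) : ℂ) * ξ (shiftHat r z))
    (π : (X → ℂ) → (Lp ℂ 2 lamC →L[ℂ] Lp ℂ 2 lamC))
    (hπ : ∀ f : X → ℂ, Measurable f → (∃ M : ℝ, ∀ x, ‖f x‖ ≤ M) →
      ∀ ξ : Lp ℂ 2 lamC, ⇑(π f ξ) =ᵐ[lamC] fun z => f (z.1 0) * ξ z)
    (Upow : ℤ → (Lp ℂ 2 lamC ≃ₗᵢ[ℂ] Lp ℂ 2 lamC))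
    (hUpow0 : Upow 0 = LinearIsometryEquiv.refl ℂ (Lp ℂ 2 lamC))
    (hUpowS : ∀ (k : ℤ) (ξ : Lp ℂ 2 lamC), Upow (k + 1) ξ = U (Upow k ξ))
    (φ : Lp ℂ 2 lamC) (hφ : ⇑φ =ᵐ[lamC] scalingFn r α ι m0)
    :
    ∀ V0 : Set (Lp ℂ 2 lamC),
      V0 = closure {ξ : Lp ℂ 2 lamC |
        ∃ f : X → ℂ, Measurable f ∧ (∃ M : ℝ, ∀ x, ‖f x‖ ≤ M) ∧ ξ = π f φ} →
      (∀ n : ℤ, (fun ξ => Upow (-n) ξ) '' V0 ⊆ (fun ξ => Upow (-(n + 1)) ξ) '' V0) ∧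
      closure (⋃ n : ℤ, (fun ξ => Upow (-n) ξ) '' V0) = Set.univ := by
  rintro _ rfl
  have : NeZero p := ⟨hp.ne'⟩
  obtain rfl : Upow = (U ^ ·) := funext <|
    eq_zpow_of_map_add_one hUpow0 fun k => LinearIsometryEquiv.ext (hUpowS k)
  exact statement11_general hr hsi ⟨hxc, hcyc, hrep, hrc, hcc⟩ hlam hι hm0m hm0b
    ⟨hα, hβmono, hβsum, hβlip, hqmf, hlp⟩ hU hπ hφ
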